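/- Let k be an algebraically closed field of characteristic 0 or p > 2, m an even positive integer not divisible by the characteristic of k, ζ ∈ k a primitive m-th root of unity, and n ≥ 2. Let u ∈ O(2n,k) be such that m is the least positive integer j with u^j ∈ {I, −I} (so Int u has order m as an automorphism of SO(2n,k)). Set 𝔤(1) = {x ∈ so(2n,k) : u·x·u⁻¹ = ζ·x} and H = {h ∈ SO(2n,k) : h·u = u·h}. Let c be a Cartan subspace of 𝔤(1) and r = dim c. If u^m = −I, then with respect to a suitable basis of c the little Weyl group of c with respect to H equals G(m,1,r). If u^m = I, then it equals G(m,1,r) when n > mr/2 and there exists x ∈ O(2n,k) with det x = −1 such that x·u = u·x and x commutes with every element of c, and it equals G(m,2,r) otherwise. -/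

import Mathlib

open Matrix

/-- The group `G(m,q,r)` of `r×r` monomial matrices whose nonzero entries are
`m`-th roots of unity and the product of whose nonzero entries is an
`(m/q)`-th root of unity, as a set of matrices. -/
def GmqrSet (k : Type*) [Field k] (m q r : ℕ) : Set (Matrix (Fin r) (Fin r) k) :=
  {w | ∃ σ : Equiv.Perm (Fin r),
    (∀ i j, i ≠ σ j → w i j = 0) ∧
    (∀ j, w (σ j) j ^ m = 1) ∧
    (∏ j, w (σ j) j) ^ (m / q) = 1}

/-- A matrix is semisimple if it is diagonalizable. -/
def IsSemisimpleMat {k : Type*} [Field k] {N : Type*} [Fintype N] [DecidableEq N]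
    (x : Matrix N N k) : Prop :=
  ∃ P : Matrix N N k, IsUnit P.det ∧ (P * x * P⁻¹).IsDiag

/-- `c` is a Cartan subspace of `g1`: a subspace of `g1`, consisting of
pairwise commuting diagonalizable matrices, and maximal among such. -/
def IsCartanSubspace {k : Type*} [Field k] {N : Type*} [Fintype N] [DecidableEq N]
    (g1 : Set (Matrix N N k)) (c : Submodule k (Matrix N N k)) : Prop :=
  (c : Set (Matrix N N k)) ⊆ g1 ∧
  (∀ x ∈ c, ∀ y ∈ c, x * y = y * x) ∧
  (∀ x ∈ c, IsSemisimpleMat x) ∧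
  ∀ c' : Submodule k (Matrix N N k),
    ((c' : Set (Matrix N N k)) ⊆ g1 ∧ (∀ x ∈ c', ∀ y ∈ c', x * y = y * x) ∧
      (∀ x ∈ c', IsSemisimpleMat x)) → c ≤ c' → c' = c

/-- The little Weyl group of `c` with respect to `H`, written with respect to
the family `b` (a basis of `c`): the set of matrices of the transformations
`x ↦ h·x·h⁻¹` of `c`, for `h ∈ H` normalizing `c`. -/
def littleWeylSet {k : Type*} [Field k] {N : Type*} [Fintype N] [DecidableEq N] {r : ℕ}
    (H : Set (Matrix N N k)) (c : Submodule k (Matrix N N k))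
    (b : Fin r → Matrix N N k) : Set (Matrix (Fin r) (Fin r) k) :=
  {w | ∃ h ∈ H, (∀ x ∈ c, h * x * h⁻¹ ∈ c) ∧ (∀ x ∈ c, h⁻¹ * x * h ∈ c) ∧
    ∀ j, h * b j * h⁻¹ = ∑ i, w i j • b i}

/-- The `N×N` matrix with `1` on the antidiagonal and `0` elsewhere. -/
def antidiagJ (k : Type*) [Field k] (N : ℕ) : Matrix (Fin N) (Fin N) k :=
  Matrix.of fun i j => if (i : ℕ) + (j : ℕ) = N - 1 then 1 else 0

section partA
variable {k : Type*} [Field k] {N : Type*} [Fintype N] [DecidableEq N]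

/-- A diagonalizable matrix gives a semisimple endomorphism. -/
theorem IsSemisimpleMat.isSemisimple {x : Matrix N N k} (hx : IsSemisimpleMat x) :
    Module.End.IsSemisimple (Matrix.toLin' x) := by
  classical
  obtain ⟨P, hP, hd⟩ := hx
  set d := (P * x * P⁻¹).diag with hdd
  have hD : P * x * P⁻¹ = diagonal d := hd.diagonal_diag.symm
  have hx' : x = P⁻¹ * diagonal d * P := by
    rw [← hD]
    simp only [← Matrix.mul_assoc]
    rw [Matrix.nonsing_inv_mul _ hP, Matrix.one_mul, Matrix.mul_assoc,
      Matrix.nonsing_inv_mul _ hP, Matrix.mul_one]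
  let p : Polynomial k := ∏ a ∈ Finset.univ.image d, (Polynomial.X - Polynomial.C a)
  have hp : Squarefree p := by
    apply Polynomial.Separable.squarefree
    exact Polynomial.separable_prod_X_sub_C_iff'.2 (fun a _ b _ h => h)
  refine Module.End.isSemisimple_of_squarefree_aeval_eq_zero hp ?_
  have h1 : ∀ q : Polynomial k, Polynomial.aeval (diagonal d) q
      = diagonal (fun i => q.eval (d i)) := by
    intro q
    have := Polynomial.aeval_algHom_apply (Matrix.diagonalAlgHom (n := N) (α := k) k) d q
    simp only [Matrix.diagonalAlgHom_apply] at this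
    rw [this]
    congr 1
    funext i
    simp
  have h2 : ∀ q : Polynomial k, Polynomial.aeval x q
      = P⁻¹ * Polynomial.aeval (diagonal d) q * P := by
    intro q
    induction q using Polynomial.induction_on' with
    | add p q hp hq => simp [hp, hq, Matrix.mul_add, Matrix.add_mul]
    | monomial j a =>
      have : ∀ j : ℕ, x ^ j = P⁻¹ * diagonal d ^ j * P := by
        intro j
        induction j with
        | zero => simp [Matrix.nonsing_inv_mul _ hP]
        | succ j ih =>
          rw [pow_succ, ih, pow_succ]
          nth_rw 1 [hx']
          simp only [Matrix.mul_assoc]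
          rw [Matrix.mul_nonsing_inv_cancel_left _ _ hP]
      simp only [Polynomial.aeval_monomial]
      rw [this, ← Algebra.smul_def, ← Algebra.smul_def]
      simp
  have h3 : Polynomial.aeval x p = 0 := by
    rw [h2, h1]
    have : (fun i => p.eval (d i)) = 0 := by
      funext i
      simp only [p, Polynomial.eval_prod, Pi.zero_apply]
      apply Finset.prod_eq_zero (Finset.mem_image_of_mem d (Finset.mem_univ i))
      simp
    rw [this]
    simp
  have h4 := Polynomial.aeval_algHom_apply (Matrix.toLinAlgEquiv' (n := N) (R := k)).toAlgHom x p
  have h5 : (Matrix.toLinAlgEquiv' (n := N) (R := k)).toAlgHom x = Matrix.toLin' x := rfl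
  rw [h5, h3] at h4
  rw [h4]
  simp

/-- simultaneous diagonalization -/
theorem exists_simul_diag [IsAlgClosed k] (c : Set (Matrix N N k))
    (hcomm : ∀ x ∈ c, ∀ y ∈ c, x * y = y * x)
    (hss : ∀ x ∈ c, Module.End.IsSemisimple (Matrix.toLin' x)) :
    ∃ P : Matrix N N k, IsUnit P.det ∧ ∀ x ∈ c, (P * x * P⁻¹).IsDiag := by
  classical
  let f : c → Module.End k (N → k) := fun x => Matrix.toLin' x.1
  have h1 := Module.End.iSup_iInf_maxGenEigenspace_eq_top_of_iSup_maxGenEigenspace_eq_top_of_commute f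
    (fun x y _ => by
      show Matrix.toLin' x.1 * Matrix.toLin' y.1 = Matrix.toLin' y.1 * Matrix.toLin' x.1
      rw [Module.End.mul_eq_comp, Module.End.mul_eq_comp, ← Matrix.toLin'_mul, ← Matrix.toLin'_mul, hcomm x.1 x.2 y.1 y.2])
    (fun i => Module.End.iSup_maxGenEigenspace_eq_top _)
  let s : Set (N → k) := {v | ∀ x : c, ∃ a : k, f x v = a • v}
  have hs : ⊤ ≤ Submodule.span k s := by
    rw [← h1]
    refine iSup_le fun χ v hv => Submodule.subset_span ?_
    intro x
    refine ⟨χ x, ?_⟩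
    rw [Submodule.mem_iInf] at hv
    have := hv x
    rw [(hss x.1 x.2).isFinitelySemisimple.maxGenEigenspace_eq_eigenspace] at this
    exact Module.End.mem_eigenspace_iff.1 this
  let B := Module.Basis.ofSpan hs
  have e : _ ≃ N := B.indexEquiv (Pi.basisFun k N)
  let B' := B.reindex e
  have hB : ∀ i, B' i ∈ s := by
    intro i
    apply Module.Basis.ofSpan_subset hs
    simp [B', B]
  let Q : Matrix N N k := Matrix.of fun i j => B' j i
  have hQ : IsUnit Q.det := by
    have : Q = (Pi.basisFun k N).toMatrix B' := by
      ext i j; simp [Q, Module.Basis.toMatrix_apply]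
    rw [this]
    rw [← Matrix.isUnit_iff_isUnit_det]
    have := (Pi.basisFun k N).invertibleToMatrix B'
    exact isUnit_of_invertible _
  refine ⟨Q⁻¹, by simpa using (Matrix.isUnit_nonsing_inv_det _ hQ), ?_⟩
  intro x hx
  rw [Matrix.nonsing_inv_nonsing_inv _ hQ]
  choose a ha using fun i => hB i ⟨x, hx⟩
  have : x * Q = Q * diagonal a := by
    ext i j
    have := congrFun (ha j) i
    simp only [f, Matrix.toLin'_apply, Matrix.mulVec, dotProduct, Pi.smul_apply, smul_eq_mul] at this
    rw [Matrix.mul_diagonal, Matrix.mul_apply]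
    simp only [Q, Matrix.of_apply]
    rw [this, mul_comm]
  rw [Matrix.mul_assoc, this, ← Matrix.mul_assoc, Matrix.nonsing_inv_mul _ hQ, Matrix.one_mul]
  exact Matrix.isDiag_diagonal _

theorem isSemisimple_of_pow [IsAlgClosed k] (x : Matrix N N k) (m : ℕ) (hm : (m : k) ≠ 0)
    (h : x ^ (m + 1) = x) : Module.End.IsSemisimple (Matrix.toLin' x) := by
  have hm0 : m ≠ 0 := by rintro rfl; simp at hm
  refine Module.End.isSemisimple_of_squarefree_aeval_eq_zero
    (p := Polynomial.X * (Polynomial.X ^ m - Polynomial.C 1)) ?_ ?_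
  · apply Polynomial.Separable.squarefree
    apply Polynomial.Separable.mul Polynomial.separable_X
    · exact Polynomial.separable_X_pow_sub_C 1 hm one_ne_zero
    · refine ⟨Polynomial.X ^ (m - 1), -1, ?_⟩
      rw [← pow_succ, Nat.sub_add_cancel (Nat.one_le_iff_ne_zero.2 hm0)]
      simp
  · have : ∀ j, (Matrix.toLin' x) ^ j = Matrix.toLin' (x ^ j) := by
      intro j; rw [Matrix.toLin'_pow]
    simp only [map_mul, Polynomial.aeval_X, map_sub, map_pow, map_one]
    rw [mul_sub, mul_one, ← pow_succ', this, h, sub_self]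

theorem isSemisimpleMat_iff [IsAlgClosed k] (x : Matrix N N k) :
    IsSemisimpleMat x ↔ Module.End.IsSemisimple (Matrix.toLin' x) := by
  refine ⟨fun h => h.isSemisimple, fun h => ?_⟩
  obtain ⟨P, hP, h2⟩ := exists_simul_diag {x} (by simp) (by simpa using h)
  exact ⟨P, hP, h2 x rfl⟩

/-- the use of maximality -/
theorem IsCartanSubspace.mem_of [IsAlgClosed k] {g1 : Submodule k (Matrix N N k)}
    {c : Submodule k (Matrix N N k)}
    (hc : IsCartanSubspace (g1 : Set (Matrix N N k)) c) (a : Matrix N N k) (ha : a ∈ g1)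
    (hcomm : ∀ x ∈ c, a * x = x * a) (m : ℕ) (hm : (m : k) ≠ 0) (h : a ^ (m + 1) = a) :
    a ∈ c := by
  obtain ⟨h1, h2, h3, h4⟩ := hc
  have hcs : ∀ x ∈ (insert a (c : Set (Matrix N N k))), ∀ y ∈ (insert a (c : Set (Matrix N N k))),
      x * y = y * x := by
    rintro x (rfl | hx) y (rfl | hy)
    · rfl
    · exact hcomm y hy
    · exact (hcomm x hx).symm
    · exact h2 x hx y hy
  obtain ⟨P, hP, hd⟩ := exists_simul_diag (insert a (c : Set (Matrix N N k))) hcs (by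
    rintro x (rfl | hx)
    · exact isSemisimple_of_pow x m hm h
    · exact (h3 x hx).isSemisimple)
  have key : ∀ x ∈ c ⊔ Submodule.span k {a}, ∃ y ∈ c, ∃ t : k, x = y + t • a := by
    intro x hx
    obtain ⟨y, hy, z, hz, rfl⟩ := Submodule.mem_sup.1 hx
    obtain ⟨t, rfl⟩ := Submodule.mem_span_singleton.1 hz
    exact ⟨y, hy, t, rfl⟩
  have := h4 (c ⊔ Submodule.span k {a}) ⟨?_, ?_, ?_⟩ le_sup_left
  · rw [← this]
    exact Submodule.mem_sup_right (Submodule.mem_span_singleton_self a)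
  · have : c ⊔ Submodule.span k {a} ≤ g1 :=
      sup_le h1 ((Submodule.span_singleton_le_iff_mem _ _).2 ha)
    exact this
  · intro x hx y hy
    obtain ⟨x, hx', t, rfl⟩ := key x hx
    obtain ⟨y, hy', s, rfl⟩ := key y hy
    simp only [mul_add, add_mul, Matrix.mul_smul, Matrix.smul_mul, hcomm x hx', hcomm y hy',
      h2 x hx' y hy', smul_smul, mul_comm s t]
    abel
  · intro x hx
    obtain ⟨x, hx', t, rfl⟩ := key x hx
    refine ⟨P, hP, ?_⟩
    rw [Matrix.mul_add, Matrix.add_mul, Matrix.mul_smul, Matrix.smul_mul]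
    exact (hd x (Or.inr hx')).add ((hd a (Or.inl rfl)).smul t)
end partA
section partB
variable {k : Type*} [Field k] {A : Type*} [Ring A] [Algebra k A]

/-- twisted orbit sum of `q` under powers of `θ` -/
def Phi (θ : A ≃ₐ[k] A) (m : ℕ) (t : k) (q : A) : A :=
  ∑ j ∈ Finset.range m, t ^ j • (θ ^ j) q

/-- `p` is orthogonal to all nontrivial translates of `q` -/
def Orth (θ : A ≃ₐ[k] A) (m : ℕ) (p q : A) : Prop :=
  ∀ j, 0 < j → j < m → p * (θ ^ j) q = 0

theorem th_add (θ : A ≃ₐ[k] A) (i j : ℕ) (x : A) : (θ ^ (i + j)) x = (θ ^ i) ((θ ^ j) x) := by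
  rw [pow_add]; rfl

theorem Phi_mul {θ : A ≃ₐ[k] A} {m : ℕ} (hθ : θ ^ m = 1) (s t : k) {p q : A}
    (h : Orth θ m p q) : Phi θ m s p * Phi θ m t q = Phi θ m (s * t) (p * q) := by
  unfold Phi
  rw [Finset.sum_mul_sum]
  apply Finset.sum_congr rfl
  intro i hi
  rw [Finset.mem_range] at hi
  rw [Finset.sum_eq_single i]
  · rw [smul_mul_smul_comm, map_mul, mul_pow]
  · intro j hj hji
    rw [Finset.mem_range] at hj
    rw [smul_mul_smul_comm]
    have : (θ ^ i) p * (θ ^ j) q = 0 := by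
      rcases lt_or_gt_of_ne hji with hlt | hlt
      · have : (θ ^ j) q = (θ ^ i) ((θ ^ (m + j - i)) q) := by
          rw [← th_add, show i + (m + j - i) = m + j by omega, th_add, hθ]; rfl
        rw [this, ← map_mul, h _ (by omega) (by omega), map_zero]
      · have : (θ ^ j) q = (θ ^ i) ((θ ^ (j - i)) q) := by
          rw [← th_add, show i + (j - i) = j by omega]
        rw [this, ← map_mul, h _ (by omega) (by omega), map_zero]
    rw [this, smul_zero]
  · intro h'
    exact absurd (Finset.mem_range.2 hi) h'

theorem Phi_theta {θ : A ≃ₐ[k] A} {m : ℕ} (hθ : θ ^ m = 1) {t : k} (ht : t ^ m = 1) (q : A) :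
    t • θ (Phi θ m t q) = Phi θ m t q := by
  unfold Phi
  rw [map_sum, Finset.smul_sum]
  have h1 : ∀ j, t • θ (t ^ j • (θ ^ j) q) = t ^ (j + 1) • (θ ^ (j + 1)) q := by
    intro j
    rw [map_smul, smul_smul, ← pow_succ', add_comm j 1, th_add, pow_one]
  simp only [h1]
  have h2 := Finset.sum_range_succ' (fun j => t ^ j • (θ ^ j) q) m
  rw [Finset.sum_range_succ] at h2
  rw [hθ, ht] at h2
  simp only [pow_zero] at h2
  exact (add_right_cancel h2).symm

theorem Phi_theta_pow {θ : A ≃ₐ[k] A} {m : ℕ} (hθ : θ ^ m = 1) {t : k} (ht : t ^ m = 1) (q : A)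
    (j : ℕ) : t ^ j • (θ ^ j) (Phi θ m t q) = Phi θ m t q := by
  induction j with
  | zero => simp
  | succ j ih =>
    rw [add_comm, th_add, pow_one, pow_add, pow_one, mul_smul, ← map_smul, ih, Phi_theta hθ ht]

theorem Phi_comm_map {θ : A ≃ₐ[k] A} {m : ℕ} (t : k) (q : A) (j : ℕ) :
    Phi θ m t ((θ ^ j) q) = (θ ^ j) (Phi θ m t q) := by
  unfold Phi
  rw [map_sum]
  apply Finset.sum_congr rfl
  intro i _
  rw [map_smul, ← th_add, ← th_add, add_comm]

theorem Phi_tau {θ : A ≃ₐ[k] A} {m : ℕ} (t : k) (τ : A →ₗ[k] A)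
    (hτθ : ∀ x, τ (θ x) = θ (τ x)) (q : A) :
    τ (Phi θ m t q) = Phi θ m t (τ q) := by
  have h : ∀ j x, τ ((θ ^ j) x) = (θ ^ j) (τ x) := by
    intro j
    induction j with
    | zero => intro x; rfl
    | succ j ih => intro x; rw [th_add, ih, th_add, pow_one, hτθ]
  unfold Phi
  rw [map_sum]
  apply Finset.sum_congr rfl
  intro i _
  rw [map_smul, h]

theorem Phi_add {θ : A ≃ₐ[k] A} {m : ℕ} (t : k) (p q : A) :
    Phi θ m t (p + q) = Phi θ m t p + Phi θ m t q := by
  simp [Phi, Finset.sum_add_distrib]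

theorem Phi_smul {θ : A ≃ₐ[k] A} {m : ℕ} (t s : k) (p : A) :
    Phi θ m t (s • p) = s • Phi θ m t p := by
  simp [Phi, Finset.smul_sum, smul_comm s]

theorem Phi_zero {θ : A ≃ₐ[k] A} {m : ℕ} (t : k) : Phi θ m t (0 : A) = 0 := by
  simp [Phi]

theorem Phi_pow {θ : A ≃ₐ[k] A} {m : ℕ} (hθ : θ ^ m = 1) (t : k) {q : A}
    (h : Orth θ m q q) (hq : q * q = q) (j : ℕ) :
    Phi θ m t q ^ (j + 1) = Phi θ m (t ^ (j + 1)) q := by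
  induction j with
  | zero => simp
  | succ j ih => rw [pow_succ, ih, Phi_mul hθ _ _ h, hq, ← pow_succ]

theorem mul_Phi {θ : A ≃ₐ[k] A} {m : ℕ} (hm : 0 < m) (t : k) {p q : A}
    (h : Orth θ m p q) : p * Phi θ m t q = p * q := by
  unfold Phi
  rw [Finset.mul_sum, Finset.sum_eq_single 0]
  · simp
  · intro j hj hj0
    rw [mul_smul_comm, h j (Nat.pos_of_ne_zero hj0) (Finset.mem_range.1 hj), smul_zero]
  · intro h'; exact absurd (Finset.mem_range.2 hm) h'

theorem Orth.symm_mul {θ : A ≃ₐ[k] A} {m : ℕ} (hθ : θ ^ m = 1) {p q : A} (h : Orth θ m p q)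
    (j : ℕ) (hj : 0 < j) (hjm : j < m) : (θ ^ j) p * q = 0 := by
  have : q = (θ ^ j) ((θ ^ (m - j)) q) := by
    rw [← th_add, show j + (m - j) = m by omega, hθ]; rfl
  rw [this, ← map_mul, h _ (by omega) (by omega), map_zero]

theorem Phi_mul' {θ : A ≃ₐ[k] A} {m : ℕ} (hθ : θ ^ m = 1) (hm : 0 < m) (t : k) {p q : A}
    (h : Orth θ m p q) : Phi θ m t p * q = p * q := by
  unfold Phi
  rw [Finset.sum_mul, Finset.sum_eq_single 0]
  · simp
  · intro j hj hj0
    rw [smul_mul_assoc, h.symm_mul hθ j (Nat.pos_of_ne_zero hj0) (Finset.mem_range.1 hj), smul_zero]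
  · intro h'; exact absurd (Finset.mem_range.2 hm) h'

theorem Orth.of_mul {θ : A ≃ₐ[k] A} {m : ℕ} {p q p' q' : A} (h : Orth θ m p q)
    (hp : p' * p = p') (hq : q * q' = q') : Orth θ m p' q' := by
  intro j h1 h2
  rw [← hp, ← hq, map_mul, mul_assoc, ← mul_assoc p, h j h1 h2, zero_mul, mul_zero]

/-- data extracted from a Cartan subspace -/
structure CData (θ : A ≃ₐ[k] A) (τ : A →ₗ[k] A) (m : ℕ) (ζ : k) (c : Submodule k A) (r : ℕ)
    (e : Fin r → A) : Prop where
  idem : ∀ i, e i * e i = e i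
  ne : ∀ i, e i ≠ 0
  orth : ∀ i l, Orth θ m (e i) (e l)
  orth' : ∀ i l, i ≠ l → e i * e l = 0
  tau : ∀ i, τ (e i) = (θ ^ (m / 2)) (e i)
  li : LinearIndependent k (fun i => Phi θ m ζ (e i))
  span : Submodule.span k (Set.range fun i => Phi θ m ζ (e i)) = c
  comm : ∀ y, (∀ x ∈ c, y * x = x * y) → ∀ i, y * e i = e i * y
end partB

section partC
variable {k : Type*} [Field k] {N : Type*} [Fintype N] [DecidableEq N]

open Classical in
/-- weight idempotent -/
noncomputable def wId (c : Submodule k (Matrix N N k)) (P : Matrix N N k) (f : c → k) :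
    Matrix N N k :=
  P⁻¹ * diagonal (fun i => if (fun x : c => (P * x.1 * P⁻¹) i i) = f then (1 : k) else 0) * P

variable {c : Submodule k (Matrix N N k)} {P : Matrix N N k}

theorem wId_left (hP : IsUnit P.det) (hd : ∀ x ∈ c, (P * x * P⁻¹).IsDiag) (f : c → k)
    (y : Matrix N N k) (hy : ∀ x : c, x.1 * y = f x • y) : wId c P f * y = y := by
  classical
  unfold wId
  have h1 : diagonal (fun i => if (fun x : c => (P * x.1 * P⁻¹) i i) = f then (1 : k) else 0)
      * (P * y) = P * y := by
    ext i j
    rw [Matrix.diagonal_mul]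
    split_ifs with h
    · rw [one_mul]
    · rw [zero_mul]
      obtain ⟨x, hx⟩ := Function.ne_iff.1 h
      have h2 : (P * x.1 * P⁻¹) * (P * y) = f x • (P * y) := by
        rw [Matrix.mul_assoc, Matrix.nonsing_inv_mul_cancel_left _ _ hP, Matrix.mul_assoc, hy,
          Matrix.mul_smul]
      rw [← (hd x.1 x.2).diagonal_diag] at h2
      have h3 := congrFun (congrFun h2 i) j
      rw [Matrix.diagonal_mul, Matrix.smul_apply, smul_eq_mul] at h3
      by_contra h0
      exact hx (mul_right_cancel₀ (Ne.symm h0) h3)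
  rw [Matrix.mul_assoc, Matrix.mul_assoc, h1, Matrix.nonsing_inv_mul_cancel_left _ _ hP]

theorem wId_right (hP : IsUnit P.det) (hd : ∀ x ∈ c, (P * x * P⁻¹).IsDiag) (f : c → k)
    (y : Matrix N N k) (hy : ∀ x : c, y * x.1 = f x • y) : y * wId c P f = y := by
  classical
  unfold wId
  have h1 : (y * P⁻¹) * diagonal (fun i => if (fun x : c => (P * x.1 * P⁻¹) i i) = f
      then (1 : k) else 0) = y * P⁻¹ := by
    ext i j
    rw [Matrix.mul_diagonal]
    split_ifs with h
    · rw [mul_one]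
    · rw [mul_zero]
      obtain ⟨x, hx⟩ := Function.ne_iff.1 h
      have h2 : (y * P⁻¹) * (P * x.1 * P⁻¹) = f x • (y * P⁻¹) := by
        rw [Matrix.mul_assoc, Matrix.mul_assoc, Matrix.nonsing_inv_mul_cancel_left _ _ hP,
          ← Matrix.mul_assoc, hy, Matrix.smul_mul]
      rw [← (hd x.1 x.2).diagonal_diag] at h2
      have h3 := congrFun (congrFun h2 i) j
      rw [Matrix.mul_diagonal, Matrix.smul_apply, smul_eq_mul, mul_comm] at h3
      by_contra h0
      exact hx (mul_right_cancel₀ (Ne.symm h0) h3)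
  rw [← Matrix.mul_assoc, ← Matrix.mul_assoc, h1, Matrix.mul_assoc, Matrix.nonsing_inv_mul _ hP,
    Matrix.mul_one]

theorem wt_conj (hP : IsUnit P.det) (hd : ∀ x ∈ c, (P * x * P⁻¹).IsDiag) (x : c) :
    x.1 * P⁻¹ = P⁻¹ * diagonal (fun i => (P * x.1 * P⁻¹) i i) ∧
    P * x.1 = diagonal (fun i => (P * x.1 * P⁻¹) i i) * P := by
  have h : diagonal (fun i => (P * x.1 * P⁻¹) i i) = P * x.1 * P⁻¹ := (hd x.1 x.2).diagonal_diag
  rw [h]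
  constructor
  · rw [Matrix.mul_assoc, Matrix.nonsing_inv_mul_cancel_left _ _ hP]
  · rw [Matrix.mul_assoc, Matrix.mul_assoc, Matrix.nonsing_inv_mul _ hP, Matrix.mul_one]

theorem mul_wId (hP : IsUnit P.det) (hd : ∀ x ∈ c, (P * x * P⁻¹).IsDiag) (f : c → k) (x : c) :
    x.1 * wId c P f = f x • wId c P f := by
  classical
  unfold wId
  rw [← Matrix.mul_assoc, ← Matrix.mul_assoc, (wt_conj hP hd x).1, Matrix.mul_assoc P⁻¹,
    Matrix.diagonal_mul_diagonal, ← Matrix.smul_mul, ← Matrix.mul_smul]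
  congr 2
  rw [← Matrix.diagonal_smul]
  congr 1
  funext i
  simp only [Pi.smul_apply, smul_eq_mul]
  split_ifs with h
  · rw [← h]
  · simp

theorem wId_mul (hP : IsUnit P.det) (hd : ∀ x ∈ c, (P * x * P⁻¹).IsDiag) (f : c → k) (x : c) :
    wId c P f * x.1 = f x • wId c P f := by
  classical
  unfold wId
  rw [Matrix.mul_assoc, (wt_conj hP hd x).2, ← Matrix.mul_assoc, Matrix.mul_assoc P⁻¹,
    Matrix.diagonal_mul_diagonal, ← Matrix.smul_mul, ← Matrix.mul_smul]
  congr 2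
  rw [← Matrix.diagonal_smul]
  congr 1
  funext i
  simp only [Pi.smul_apply, smul_eq_mul]
  split_ifs with h
  · rw [← h]; simp
  · simp

theorem wId_idem (hP : IsUnit P.det) (hd : ∀ x ∈ c, (P * x * P⁻¹).IsDiag) (f : c → k) :
    wId c P f * wId c P f = wId c P f :=
  wId_left hP hd f _ (mul_wId hP hd f)

theorem wId_orth (hP : IsUnit P.det) (hd : ∀ x ∈ c, (P * x * P⁻¹).IsDiag) {f g : c → k}
    (h : f ≠ g) : wId c P f * wId c P g = 0 := by
  obtain ⟨x, hx⟩ := Function.ne_iff.1 h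
  have h1 : f x • (wId c P f * wId c P g) = g x • (wId c P f * wId c P g) := by
    rw [← Matrix.smul_mul, ← wId_mul hP hd, Matrix.mul_assoc, mul_wId hP hd, Matrix.mul_smul]
  rw [← sub_eq_zero, ← sub_smul] at h1
  exact (smul_eq_zero.1 h1).resolve_left (sub_ne_zero.2 hx)

theorem wId_total (hP : IsUnit P.det) (y : Matrix N N k)
    (hy : ∀ f : c → k, wId c P f * y = 0) : y = 0 := by
  classical
  have h : P * y = 0 := by
    ext i j
    have h1 := hy (fun x : c => (P * x.1 * P⁻¹) i i)
    unfold wId at h1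
    have h2 := congrArg (fun z => (P * z) i j) h1
    simp only [Matrix.mul_assoc] at h2
    rw [Matrix.mul_nonsing_inv_cancel_left _ _ hP, Matrix.diagonal_mul] at h2
    simpa using h2
  rw [← Matrix.nonsing_inv_mul_cancel_left (A := P) y hP, h, Matrix.mul_zero]

theorem wId_ne (hP : IsUnit P.det) (i : N) :
    wId c P (fun x : c => (P * x.1 * P⁻¹) i i) ≠ 0 := by
  classical
  intro h
  unfold wId at h
  have h2 := congrArg (fun z => (P * z * P⁻¹) i i) h
  simp only [Matrix.mul_assoc] at h2
  rw [Matrix.mul_nonsing_inv_cancel_left _ _ hP, Matrix.mul_nonsing_inv _ hP] at h2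
  simp at h2

theorem wId_comm (hP : IsUnit P.det) (hd : ∀ x ∈ c, (P * x * P⁻¹).IsDiag) (f : c → k)
    (y : Matrix N N k) (hy : ∀ x ∈ c, y * x = x * y) : y * wId c P f = wId c P f * y := by
  have h1 : wId c P f * (y * wId c P f) = y * wId c P f := by
    apply wId_left hP hd
    intro x
    rw [← Matrix.mul_assoc, ← hy x.1 x.2, Matrix.mul_assoc, mul_wId hP hd, Matrix.mul_smul]
  have h2 : (wId c P f * y) * wId c P f = wId c P f * y := by
    apply wId_right hP hd
    intro x
    rw [Matrix.mul_assoc, hy x.1 x.2, ← Matrix.mul_assoc, wId_mul hP hd, Matrix.smul_mul]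
  rw [← h1, ← Matrix.mul_assoc, h2]

theorem wId_zero_of (f : c → k)
    (h : ∀ i : N, (fun x : c => (P * x.1 * P⁻¹) i i) ≠ f) : wId c P f = 0 := by
  unfold wId
  simp [h]

theorem exists_cdata (hP : IsUnit P.det) (hd : ∀ x ∈ c, (P * x * P⁻¹).IsDiag)
    (θ : Matrix N N k ≃ₐ[k] Matrix N N k) (τ : Matrix N N k →ₗ[k] Matrix N N k)
    (m : ℕ) (hm : 0 < m) (hmeven : Even m) (hθ : θ ^ m = 1) (ζ : k) (hζ : IsPrimitiveRoot ζ m)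
    (hτm : ∀ x y, τ (x * y) = τ y * τ x) (hττ : ∀ x, τ (τ x) = x)
    (hτθ : ∀ x, τ (θ x) = θ (τ x))
    (hcθ : ∀ x ∈ c, ζ • θ x = x) (hcτ : ∀ x ∈ c, τ x = -x)
    (hmax : ∀ a, (∀ x ∈ c, a * x = x * a) → τ a = -a → ζ • θ a = a → a ^ (m + 1) = a → a ∈ c)
    (r : ℕ) (hr : Module.finrank k c = r) :
    ∃ e : Fin r → Matrix N N k, CData θ τ m ζ c r e := by
  classical
  have hζ0 : ζ ≠ 0 := hζ.ne_zero hm.ne'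
  have hζhalf : ζ ^ (m / 2) = -1 := by
    obtain ⟨a, ha⟩ := hmeven
    have h2 : m / 2 = a := by omega
    have h3 : ζ ^ (m / 2) * ζ ^ (m / 2) = 1 := by rw [← pow_add, h2, ← ha, hζ.pow_eq_one]
    have h4 : ζ ^ (m / 2) ≠ 1 := hζ.pow_ne_one_of_pos_of_lt (by omega) (by omega)
    exact (mul_self_eq_one_iff.1 h3).resolve_left h4
  -- θ permutes the idempotents
  have hθe : ∀ f : c → k, θ (wId c P f) = wId c P (ζ • f) := by
    intro f
    have h1 : wId c P (ζ • f) * θ (wId c P f) = θ (wId c P f) := by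
      apply wId_left hP hd
      intro x
      have : θ (ζ • x.1) = x.1 := by rw [map_smul, hcθ x.1 x.2]
      nth_rw 1 [← this]
      rw [← map_mul, Matrix.smul_mul, mul_wId hP hd, map_smul, map_smul, smul_smul]
      rfl
    have h2 : θ.symm (wId c P (ζ • f)) * wId c P f = θ.symm (wId c P (ζ • f)) := by
      apply wId_right hP hd
      intro x
      apply θ.injective
      rw [map_mul, map_smul, AlgEquiv.apply_symm_apply]
      have : θ x.1 = ζ⁻¹ • x.1 := by
        nth_rw 2 [← hcθ x.1 x.2]; rw [smul_smul, inv_mul_cancel₀ hζ0, one_smul]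
      rw [this, Matrix.mul_smul, wId_mul hP hd, smul_smul]
      simp [hζ0]
    have h3 := congrArg θ h2
    rw [map_mul, AlgEquiv.apply_symm_apply] at h3
    rw [← h1, h3]
  have hθej : ∀ (j : ℕ) (f : c → k), (θ ^ j) (wId c P f) = wId c P (ζ ^ j • f) := by
    intro j
    induction j with
    | zero => intro f; simp
    | succ j ih => intro f; rw [th_add, pow_one, hθe, ih, smul_smul, ← pow_succ]
  have hτe : ∀ f : c → k, τ (wId c P f) = wId c P (-f) := by
    have h1 : ∀ f : c → k, τ (wId c P f) * wId c P (-f) = τ (wId c P f) := by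
      intro f
      apply wId_right hP hd
      intro x
      have : x.1 = τ (-x.1) := by rw [map_neg, hcτ x.1 x.2, neg_neg]
      rw [this, ← hτm, neg_mul, mul_wId hP hd, map_neg, map_smul, Pi.neg_apply, neg_smul]
    intro f
    have h2 := congrArg τ (h1 (-f))
    rw [hτm, hττ, neg_neg] at h2
    rw [← h1, h2]
  have hsm : ∀ (f : c → k), f ≠ 0 → ∀ i j, i < m → j < m → ζ ^ i • f = ζ ^ j • f → i = j := by
    intro f hf i j hi hj h
    have h1 : ζ ^ i = ζ ^ j := smul_left_injective k hf h
    exact hζ.pow_inj hi hj h1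
  have horth : ∀ f : c → k, f ≠ 0 → Orth θ m (wId c P f) (wId c P f) := by
    intro f hf j hj hjm
    rw [hθej]
    apply wId_orth hP hd
    intro h
    have := hsm f hf 0 j hm hjm (by simpa using h)
    omega
  have hmem : ∀ f : c → k, f ≠ 0 → Phi θ m ζ (wId c P f) ∈ c := by
    intro f hf
    apply hmax
    · intro x hx
      unfold Phi
      rw [Finset.sum_mul, Finset.mul_sum]
      apply Finset.sum_congr rfl
      intro j _
      rw [Matrix.smul_mul, Matrix.mul_smul, hθej, wId_mul hP hd _ ⟨x, hx⟩, mul_wId hP hd _ ⟨x, hx⟩]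
    · have h1 : -f = ζ ^ (m / 2) • f := by rw [hζhalf]; simp
      rw [Phi_tau _ _ hτθ, hτe, h1, ← hθej, Phi_comm_map]
      have h2 := Phi_theta_pow hθ hζ.pow_eq_one (wId c P f) (m / 2)
      rw [hζhalf, neg_one_smul] at h2
      rw [eq_neg_iff_add_eq_zero]
      nth_rw 2 [← h2]
      simp
    · exact Phi_theta hθ hζ.pow_eq_one _
    · rw [Phi_pow hθ _ (horth f hf) (wId_idem hP hd f), pow_succ, hζ.pow_eq_one, one_mul]
  -- orbits
  let wt : N → c → k := fun i x => (P * x.1 * P⁻¹) i i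
  let I := {i : N // wt i ≠ 0}
  have hmodj : ∀ (j : ℕ), ζ ^ j = ζ ^ (j % m) := fun j => by
    conv_lhs => rw [← Nat.div_add_mod j m, pow_add, pow_mul, hζ.pow_eq_one, one_pow, one_mul]
  let S : Setoid I :=
    { r := fun i l => ∃ j, j < m ∧ wt l.1 = ζ ^ j • wt i.1
      iseqv := by
        have hred : ∀ i l : I, (∃ j : ℕ, wt l.1 = ζ ^ j • wt i.1) →
            ∃ j, j < m ∧ wt l.1 = ζ ^ j • wt i.1 := by
          rintro i l ⟨j, hj⟩
          exact ⟨j % m, Nat.mod_lt _ hm, by rw [← hmodj]; exact hj⟩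
        refine ⟨fun i => ⟨0, hm, by simp⟩, ?_, ?_⟩
        · rintro i l ⟨j, hj, h⟩
          apply hred
          refine ⟨m - j, ?_⟩
          rw [h, smul_smul, ← pow_add, show m - j + j = m by omega, hζ.pow_eq_one, one_smul]
        · rintro i l p ⟨j, hj, h⟩ ⟨j', hj', h'⟩
          apply hred
          exact ⟨j' + j, by rw [h', h, smul_smul, pow_add]⟩ }
  let Q := Quotient S
  let fq : Q → c → k := fun q => wt q.out.1
  have hfq0 : ∀ q, fq q ≠ 0 := fun q => q.out.2
  have hfq : ∀ q q' j, fq q = ζ ^ j • fq q' → q = q' := by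
    intro q q' j h
    rw [hmodj] at h
    have : q'.out ≈ q.out := ⟨j % m, Nat.mod_lt _ hm, h⟩
    have := Quotient.sound this
    rw [Quotient.out_eq, Quotient.out_eq] at this
    exact this.symm
  let b : Q → Matrix N N k := fun q => Phi θ m ζ (wId c P (fq q))
  have heb : ∀ g q, (∀ j, j < m → g ≠ ζ ^ j • fq q) → wId c P g * b q = 0 := by
    intro g q h
    simp only [b, Phi]
    rw [Finset.mul_sum]
    apply Finset.sum_eq_zero
    intro j hj
    rw [Matrix.mul_smul, hθej, wId_orth hP hd (h j (Finset.mem_range.1 hj)), smul_zero]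
  have heb' : ∀ g q j, j < m → g = ζ ^ j • fq q → wId c P g * b q = ζ ^ j • wId c P g := by
    intro g q j hj h
    simp only [b, Phi]
    rw [Finset.mul_sum, Finset.sum_eq_single j]
    · rw [Matrix.mul_smul, hθej, ← h, wId_idem hP hd]
    · intro j' hj' hne
      rw [Matrix.mul_smul, hθej, wId_orth hP hd, smul_zero]
      intro h'
      exact hne (hsm _ (hfq0 q) _ _ (Finset.mem_range.1 hj') hj (by rw [← h', h]))
    · intro h'; exact absurd (Finset.mem_range.2 hj) h'
  have hli : LinearIndependent k b := by
    rw [Fintype.linearIndependent_iff]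
    intro g hg q
    have h1 := congrArg (fun z => wId c P (fq q) * z) hg
    simp only [Matrix.mul_zero] at h1
    rw [Finset.mul_sum, Finset.sum_eq_single q] at h1
    · rw [Matrix.mul_smul, heb' (fq q) q 0 hm (by simp), pow_zero, one_smul] at h1
      exact (smul_eq_zero.1 h1).resolve_right (wId_ne hP _)
    · intro q' _ hq'
      rw [Matrix.mul_smul, heb _ _ (fun j _ h => hq' (hfq _ _ _ h).symm), smul_zero]
    · simp
  have hspan : Submodule.span k (Set.range b) = c := by
    apply le_antisymm
    · rw [Submodule.span_le]
      rintro _ ⟨q, rfl⟩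
      exact hmem _ (hfq0 q)
    · intro x hx
      have h1 : x - ∑ q, fq q ⟨x, hx⟩ • b q = 0 := by
        apply wId_total (c := c) hP
        intro g
        rw [Matrix.mul_sub, Finset.mul_sum, wId_mul hP hd g ⟨x, hx⟩]
        by_cases hg : ∃ i, wt i = g
        · obtain ⟨i, rfl⟩ := hg
          by_cases h0 : wt i = 0
          · rw [Finset.sum_eq_zero]
            · rw [h0]; simp
            · intro q _
              rw [Matrix.mul_smul, heb, smul_zero]
              intro j _ h
              rw [h0] at h
              rcases smul_eq_zero.1 h.symm with h | h
              · exact pow_ne_zero _ hζ0 h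
              · exact hfq0 q h
          · let q : Q := Quotient.mk S ⟨i, h0⟩
            obtain ⟨j, hj, hji⟩ : ∃ j, j < m ∧ wt i = ζ ^ j • fq q := Quotient.mk_out (s := S) ⟨i, h0⟩
            rw [Finset.sum_eq_single q]
            · rw [Matrix.mul_smul, heb' _ q j hj hji, smul_smul, sub_eq_zero]
              nth_rw 1 [hji]
              simp [mul_comm]
            · intro q' _ hq'
              rw [Matrix.mul_smul, heb, smul_zero]
              intro j' hj' h
              apply hq'
              rw [h] at hji
              apply hfq _ _ (m - j' + j)
              rw [pow_add, mul_smul, ← hji, smul_smul, ← pow_add, show m - j' + j' = m by omega,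
                hζ.pow_eq_one, one_smul]
            · simp
        · push Not at hg
          rw [wId_zero_of g hg]
          simp
      rw [sub_eq_zero] at h1
      rw [h1]
      exact Submodule.sum_mem _ fun q _ => Submodule.smul_mem _ _ (Submodule.subset_span ⟨q, rfl⟩)
  have hcard : Fintype.card Q = r := by
    have h1 := finrank_span_eq_card hli
    have h2 : Module.finrank k (Submodule.span k (Set.range b)) = Module.finrank k c :=
      congrArg (fun s : Submodule k (Matrix N N k) => Module.finrank k s) hspan
    rw [← hr, ← h2, h1]
  let eq : Fin r ≃ Q := (Fintype.equivFinOfCardEq hcard).symm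
  refine ⟨fun i => wId c P (fq (eq i)), ?_⟩
  have hne : ∀ i l, i ≠ l → ∀ j : ℕ, fq (eq i) ≠ ζ ^ j • fq (eq l) := by
    intro i l hil j h
    exact hil (eq.injective (hfq _ _ _ h))
  refine ⟨fun i => wId_idem hP hd _, fun i => wId_ne hP _, ?_, ?_, ?_, ?_, ?_, ?_⟩
  · intro i l
    by_cases h : i = l
    · subst h; exact horth _ (hfq0 _)
    · intro j _ _
      rw [hθej]
      exact wId_orth hP hd (hne i l h j)
  · intro i l h
    have := hne i l h 0
    rw [pow_zero, one_smul] at this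
    exact wId_orth hP hd this
  · intro i
    rw [hτe, hθej, hζhalf, neg_one_smul]
  · exact hli.comp eq eq.injective
  · refine Eq.trans ?_ hspan
    congr 1
    exact eq.surjective.range_comp b
  · intro y hy i
    exact wId_comm hP hd _ y hy
end partC
section partD
variable {k : Type*} [Field k] {A : Type*} [Ring A] [Algebra k A]

theorem zeta_half {m : ℕ} (hm : 0 < m) (hmeven : Even m) {ζ : k} (hζ : IsPrimitiveRoot ζ m) :
    ζ ^ (m / 2) = -1 := by
  obtain ⟨a, ha⟩ := hmeven
  have h2 : m / 2 = a := by omega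
  have h3 : ζ ^ (m / 2) * ζ ^ (m / 2) = 1 := by rw [← pow_add, h2, ← ha, hζ.pow_eq_one]
  have h4 : ζ ^ (m / 2) ≠ 1 := hζ.pow_ne_one_of_pos_of_lt (by omega) (by omega)
  exact (mul_self_eq_one_iff.1 h3).resolve_left h4

theorem Phi_tau_half {θ : A ≃ₐ[k] A} {τ : A →ₗ[k] A} {m : ℕ} (hθ : θ ^ m = 1)
    (hτθ : ∀ x, τ (θ x) = θ (τ x)) {t : k} (ht : t ^ m = 1) {p : A}
    (hp : τ p = (θ ^ (m / 2)) p) : t ^ (m / 2) • τ (Phi θ m t p) = Phi θ m t p := by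
  rw [Phi_tau _ _ hτθ, hp, Phi_comm_map, Phi_theta_pow hθ ht]

/-- primitivity of the idempotents among self-adjoint ones -/
theorem CData.eq_of {θ : A ≃ₐ[k] A} {τ : A →ₗ[k] A} {m : ℕ} {ζ : k} {c : Submodule k A} {r : ℕ}
    {e : Fin r → A} (D : CData θ τ m ζ c r e) (hm : 0 < m) (hmeven : Even m) (hθ : θ ^ m = 1)
    (hζ : IsPrimitiveRoot ζ m) (hτθ : ∀ x, τ (θ x) = θ (τ x))
    (hmax : ∀ a, (∀ x ∈ c, a * x = x * a) → τ a = -a → ζ • θ a = a → a ^ (m + 1) = a → a ∈ c)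
    (i : Fin r) (p : A) (hpp : p * p = p) (hep : e i * p = p) (hpe : p * e i = p)
    (hτp : τ p = (θ ^ (m / 2)) p) (hp0 : p ≠ 0) : p = e i := by
  have hpl : ∀ l, Orth θ m p (e l) := fun l => (D.orth i l).of_mul hpe (D.idem l)
  have hlp : ∀ l, Orth θ m (e l) p := fun l => (D.orth l i).of_mul (D.idem l) hep
  have hppo : Orth θ m p p := (D.orth i i).of_mul hpe hep
  have hmem : Phi θ m ζ p ∈ c := by
    apply hmax
    · intro x hx
      rw [← D.span] at hx
      induction hx using Submodule.span_induction with
      | mem x hx =>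
        obtain ⟨l, rfl⟩ := hx
        simp only
        rw [Phi_mul hθ _ _ (hpl l), Phi_mul hθ _ _ (hlp l)]
        by_cases h : i = l
        · subst h; rw [hpe, hep]
        · have h1 : p * e l = 0 := by rw [← hpe, mul_assoc, D.orth' i l h, mul_zero]
          have h2 : e l * p = 0 := by
            rw [← hep, ← mul_assoc, D.orth' l i (Ne.symm h), zero_mul]
          rw [h1, h2]
      | zero => simp
      | add x y _ _ hx hy => rw [mul_add, add_mul, hx, hy]
      | smul t x _ hx => rw [mul_smul_comm, smul_mul_assoc, hx]
    · have h1 := Phi_tau_half hθ hτθ hζ.pow_eq_one hτp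
      rw [zeta_half hm hmeven hζ, neg_one_smul] at h1
      rw [← h1, neg_neg]
      rw [h1]
    · exact Phi_theta hθ hζ.pow_eq_one _
    · rw [Phi_pow hθ _ hppo hpp, pow_succ, hζ.pow_eq_one, one_mul]
  rw [← D.span] at hmem
  obtain ⟨g, hg⟩ := (Submodule.mem_span_range_iff_exists_fun k).1 hmem
  have h1 := congrArg (fun z => e i * z) hg
  rw [mul_Phi hm _ (hlp i), hep, Finset.mul_sum, Finset.sum_eq_single i] at h1
  · rw [mul_smul_comm, mul_Phi hm _ (D.orth i i), D.idem] at h1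
    have h2 : g i • p = p := by
      conv_rhs => rw [← hpp]
      nth_rw 2 [← h1]
      rw [smul_mul_assoc, hep]
    have h3 : (g i - 1) • p = 0 := by rw [sub_smul, h2, one_smul, sub_self]
    have h4 : g i = 1 := sub_eq_zero.1 ((smul_eq_zero.1 h3).resolve_right hp0)
    rw [← h1, h4, one_smul]
  · intro l _ hl
    rw [mul_smul_comm, mul_Phi hm _ (D.orth i l), D.orth' i l (Ne.symm hl), smul_zero]
  · simp
end partD

section partE
variable {k : Type*} [Field k] {N : Type*} [Fintype N] [DecidableEq N]

theorem gram_one [IsAlgClosed k] (h2 : (2 : k) ≠ 0) (M : Matrix N N k) (hM : M ≠ 0)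
    (hMt : Mᵀ = M) : ∃ Z : Matrix N (Fin 1) k, Zᵀ * M * Z = 1 := by
  have h : ∃ x : N → k, x ⬝ᵥ (M *ᵥ x) ≠ 0 := by
    by_contra! h
    apply hM
    have hs : ∀ i j, M j i = M i j := fun i j => congrFun (congrFun hMt i) j
    have hii : ∀ i, M i i = 0 := by
      intro i
      simpa using h (Pi.single i 1)
    ext i j
    have h3 := h (Pi.single i 1 + Pi.single j 1)
    simp only [Matrix.mulVec_add, dotProduct_add, add_dotProduct, single_one_dotProduct,
      Matrix.mulVec_single_one, Matrix.col_apply, hii, hs i j] at h3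
    have h4 : 2 * M i j = 0 := by linear_combination h3
    simpa using (mul_eq_zero.1 h4).resolve_left h2
  obtain ⟨x, hx⟩ := h
  obtain ⟨s, hs⟩ := IsAlgClosed.exists_pow_nat_eq (x ⬝ᵥ (M *ᵥ x))⁻¹ (n := 2) (by norm_num)
  refine ⟨Matrix.of fun i _ => s * x i, ?_⟩
  ext a b
  have hab : a = b := Subsingleton.elim _ _
  subst hab
  rw [Matrix.one_apply_eq, ← inv_mul_cancel₀ hx, ← hs]
  rw [Matrix.mul_assoc]
  simp only [Matrix.mul_apply, Matrix.transpose_apply, Matrix.of_apply,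
    dotProduct, Matrix.mulVec, Finset.mul_sum]
  apply Finset.sum_congr rfl
  intro i _
  apply Finset.sum_congr rfl
  intro j _
  ring

theorem gram_two (h2 : (2 : k) ≠ 0) (M : Matrix N N k) (hM : M ≠ 0)
    (hMt : Mᵀ = -M) : ∃ Z : Matrix N (Fin 2) k, !![0, 1; -1, 0] * (Zᵀ * M * Z) = 1 := by
  have h : ∃ i j, M i j ≠ 0 := by
    by_contra! h
    exact hM (by ext i j; simpa using h i j)
  obtain ⟨i, j, hij⟩ := h
  have hs : ∀ i j, M j i = - M i j := fun i j => congrFun (congrFun hMt i) j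
  have hii : ∀ i, M i i = 0 := by
    intro i
    have : 2 * M i i = 0 := by linear_combination hs i i
    exact (mul_eq_zero.1 this).resolve_left h2
  let Z : Matrix N (Fin 2) k := Matrix.of fun l a =>
    if a = 0 then (if l = i then -(M i j)⁻¹ else 0) else (if l = j then 1 else 0)
  refine ⟨Z, ?_⟩
  have hG : ∀ a b, (Zᵀ * M * Z) a b = ∑ y, (∑ x, Z x a * M x y) * Z y b := by
    intro a b
    simp [Matrix.mul_apply]
  have : Zᵀ * M * Z = !![0, -1; 1, 0] := by
    ext a b
    rw [hG]
    fin_cases a <;> fin_cases b <;> simp [Z, hii, hij, hs i j]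
  rw [this]
  ext a b
  fin_cases a <;> fin_cases b <;> simp

theorem gram_both [IsAlgClosed k] (h2 : (2 : k) ≠ 0) (ε : k) (hε : ε = 1 ∨ ε = -1) :
    ∃ (d : ℕ) (S : Matrix (Fin d) (Fin d) k), 0 < d ∧ Sᵀ = ε • S ∧ (ε = 1 → d = 1) ∧
      ∀ M : Matrix N N k, M ≠ 0 → Mᵀ = ε • M → ∃ Z : Matrix N (Fin d) k, S * (Zᵀ * M * Z) = 1 := by
  rcases hε with rfl | rfl
  · refine ⟨1, 1, one_pos, by simp, fun _ => rfl, fun M hM hMt => ?_⟩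
    obtain ⟨Z, hZ⟩ := gram_one h2 M hM (by simpa using hMt)
    exact ⟨Z, by rw [hZ, Matrix.one_mul]⟩
  · refine ⟨2, !![0, 1; -1, 0], two_pos, ?_, ?_, fun M hM hMt => ?_⟩
    · ext a b
      fin_cases a <;> fin_cases b <;> simp
    · intro h
      exact absurd (by linear_combination -h) h2
    · exact gram_two h2 M hM (by simpa using hMt)

/-- second-stage data -/
structure CData2 (θ : Matrix N N k ≃ₐ[k] Matrix N N k) (τ : Matrix N N k →ₗ[k] Matrix N N k) (m : ℕ)
    (r d : ℕ) (e : Fin r → Matrix N N k) (X : Fin r → Matrix N (Fin d) k)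
    (Y : Fin r → Matrix (Fin d) N k) : Prop where
  xy : ∀ i, X i * Y i = e i
  yx : ∀ i, Y i * X i = 1
  tau : ∀ i l, τ (X i * Y l) = (θ ^ (m / 2)) (X l * Y i)

theorem exists_cdata2 [IsAlgClosed k] (h2 : (2 : k) ≠ 0) (ε : k) (hε : ε = 1 ∨ ε = -1)
    {θ : Matrix N N k ≃ₐ[k] Matrix N N k} {τ : Matrix N N k →ₗ[k] Matrix N N k}
    {m : ℕ} {ζ : k} {c : Submodule k (Matrix N N k)} {r : ℕ}
    {e : Fin r → Matrix N N k} (D : CData θ τ m ζ c r e) (hm : 0 < m) (hmeven : Even m)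
    (hθ : θ ^ m = 1)
    (hζ : IsPrimitiveRoot ζ m) (hτθ : ∀ x, τ (θ x) = θ (τ x))
    (hmax : ∀ a, (∀ x ∈ c, a * x = x * a) → τ a = -a → ζ • θ a = a → a ^ (m + 1) = a → a ∈ c)
    (J K Ki : Matrix N N k) (hJt : Jᵀ = J) (hJ2 : J * J = 1) (hKi : Ki * K = 1)
    (hKK : K * K = ε • 1) (hKJ : Kᵀ * J = J * Ki) (hτ : ∀ x, τ x = J * xᵀ * J)
    (hθK : ∀ x, (θ ^ (m / 2)) x = Ki * x * K) :
    ∃ (d : ℕ) (X : Fin r → Matrix N (Fin d) k) (Y : Fin r → Matrix (Fin d) N k),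
      (ε = 1 → d = 1) ∧ CData2 θ τ m r d e X Y := by
  obtain ⟨d, S, hd, hS, hd1, hZ⟩ := gram_both (N := N) h2 ε hε
  have hεε : ε * ε = 1 := by rcases hε with rfl | rfl <;> norm_num
  have hKiK : Ki = ε • K := by
    have : Ki * (K * K) = K := by rw [← Matrix.mul_assoc, hKi, Matrix.one_mul]
    rw [hKK, Matrix.mul_smul, Matrix.mul_one] at this
    rw [← this, smul_smul, hεε, one_smul]
  have hKJ' : Kᵀ * J = ε • (J * K) := by rw [hKJ, hKiK, Matrix.mul_smul]
  have heJ : ∀ i, (e i)ᵀ * J = ε • (J * (K * (e i * K))) := by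
    intro i
    have h1 := D.tau i
    rw [hτ, hθK, hKiK] at h1
    have h3 := congrArg (fun z => J * z) h1
    simp only [← Matrix.mul_assoc, hJ2, Matrix.one_mul] at h3
    rw [h3]
    simp [Matrix.mul_assoc]
  have heJK : ∀ i, (e i)ᵀ * J * K = J * K * e i := by
    intro i
    rw [heJ]
    simp only [Matrix.smul_mul, Matrix.mul_assoc, hKK, Matrix.mul_smul, Matrix.mul_one, smul_smul,
      hεε, one_smul]
  have hM0 : ∀ i, J * K * e i ≠ 0 := by
    intro i h
    apply D.ne i
    have h1 := congrArg (fun z => Ki * (J * z)) h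
    simp only [Matrix.mul_assoc, Matrix.mul_zero] at h1
    rwa [← Matrix.mul_assoc J, hJ2, Matrix.one_mul, ← Matrix.mul_assoc, hKi, Matrix.one_mul] at h1
  have hMt : ∀ i, (J * K * e i)ᵀ = ε • (J * K * e i) := by
    intro i
    rw [Matrix.transpose_mul, Matrix.transpose_mul, hJt, hKJ', Matrix.mul_smul, ← Matrix.mul_assoc,
      heJK]
  choose Z hZ using fun i => hZ _ (hM0 i) (hMt i)
  let X : Fin r → Matrix N (Fin d) k := fun i => e i * Z i
  let Y : Fin r → Matrix (Fin d) N k := fun i => S * ((X i)ᵀ * J * K)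
  have hY : ∀ i, Y i = S * ((Z i)ᵀ * (J * K * e i)) := by
    intro i
    simp only [Y, X]
    rw [Matrix.transpose_mul, Matrix.mul_assoc (Z i)ᵀ, Matrix.mul_assoc (Z i)ᵀ, heJK]
  have hyx : ∀ i, Y i * X i = 1 := by
    intro i
    rw [hY, ← hZ i]
    simp only [X, Matrix.mul_assoc]
    rw [← Matrix.mul_assoc (e i) (e i), D.idem]
  have hτXY : ∀ i l, τ (X i * Y l) = (θ ^ (m / 2)) (X l * Y i) := by
    intro i l
    rw [hτ, hθK]
    simp only [Y, Matrix.transpose_mul, Matrix.transpose_transpose, hJt, hS]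
    have h5 : J * (Kᵀ * J) = Ki := by rw [hKJ, ← Matrix.mul_assoc, hJ2, Matrix.one_mul]
    have h6 : J * (Kᵀ * (J * X l) * (ε • S) * (X i)ᵀ) * J
        = ε • ((J * (Kᵀ * J)) * X l * (S * (X i)ᵀ * J)) := by
      simp only [Matrix.mul_smul, Matrix.smul_mul, Matrix.mul_assoc]
    rw [h6, h5]
    simp only [Matrix.mul_assoc, hKK, Matrix.mul_smul, Matrix.mul_one]
  refine ⟨d, X, Y, hd1, ?_, hyx, hτXY⟩
  intro i
  apply D.eq_of hm hmeven hθ hζ hτθ hmax i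
  · rw [Matrix.mul_assoc, ← Matrix.mul_assoc (Y i), hyx, Matrix.one_mul]
  · simp only [X]
    rw [← Matrix.mul_assoc (e i) (e i * Z i), ← Matrix.mul_assoc (e i) (e i), D.idem]
  · rw [hY]
    simp only [Matrix.mul_assoc, D.idem]
  · exact hτXY i i
  · intro h
    have h3 : (Y i * X i) * (Y i * X i) = 0 := by
      rw [Matrix.mul_assoc, ← Matrix.mul_assoc (X i), h, Matrix.zero_mul, Matrix.mul_zero]
    rw [hyx, Matrix.one_mul] at h3
    have : Nonempty (Fin d) := ⟨⟨0, hd⟩⟩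
    exact one_ne_zero h3
end partE
section partF
variable {k : Type*} [Field k] {A : Type*} [Ring A] [Algebra k A]

theorem sum_pow_orth {r : ℕ} (b : Fin r → A) (hbb : ∀ i l, i ≠ l → b i * b l = 0) (w : Fin r → k)
    (j : ℕ) : (∑ i, w i • b i) ^ (j + 1) = ∑ i, w i ^ (j + 1) • b i ^ (j + 1) := by
  induction j with
  | zero => simp
  | succ j ih =>
    rw [pow_succ, ih, Finset.sum_mul]
    apply Finset.sum_congr rfl
    intro i _
    rw [Finset.mul_sum, Finset.sum_eq_single i]
    · rw [smul_mul_smul_comm, ← pow_succ, ← pow_succ]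
    · intro l _ hl
      rw [smul_mul_smul_comm, pow_succ (b i), mul_assoc (b i ^ j), hbb i l hl.symm, mul_zero, smul_zero]
    · simp

theorem monomial_of {m r : ℕ} (hm : 2 ≤ m) (b : Fin r → A) (hli : LinearIndependent k b)
    (hbb : ∀ i l, i ≠ l → b i * b l = 0) (hbp : ∀ i, b i ^ (m + 1) = b i)
    (h h' : A) (hh' : h' * h = 1) (w : Matrix (Fin r) (Fin r) k)
    (hw : ∀ j, h * b j * h' = ∑ i, w i j • b i) :
    ∃ σ : Equiv.Perm (Fin r), (∀ i j, i ≠ σ j → w i j = 0) ∧ (∀ j, w (σ j) j ^ m = 1) := by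
  have hb0 : ∀ i, b i ≠ 0 := fun i => hli.ne_zero i
  have hconj : ∀ x y, (h * x * h') * (h * y * h') = h * (x * y) * h' := by
    intro x y
    rw [show (h * x * h') * (h * y * h') = h * x * (h' * h) * (y * h') by simp only [mul_assoc], hh',
      mul_one]
    simp only [mul_assoc]
  have hpow : ∀ x (j : ℕ), (h * x * h') ^ (j + 1) = h * x ^ (j + 1) * h' := by
    intro x j
    induction j with
    | zero => simp
    | succ j ih => rw [pow_succ, ih, hconj, ← pow_succ]
  have h1 : ∀ i j, w i j ^ (m + 1) = w i j := by
    intro i j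
    have e1 := hpow (b j) m
    rw [hbp, hw, sum_pow_orth b hbb] at e1
    simp only [hbp] at e1
    have := (Fintype.linearIndependent_iff.1 hli) (fun i => w i j ^ (m + 1) - w i j) (by
      simp only [sub_smul, Finset.sum_sub_distrib, e1, sub_self]) i
    exact sub_eq_zero.1 this
  have h2 : ∀ l j j', j ≠ j' → w l j * w l j' = 0 := by
    intro l j j' hj
    have e1 := hconj (b j) (b j')
    rw [hbb j j' hj, hw, hw, mul_zero, zero_mul] at e1
    have e2 := congrArg (fun z => b l * z) e1
    simp only [mul_zero] at e2
    have hl : ∀ j, b l * ∑ i, w i j • b i = w l j • (b l * b l) := by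
      intro j
      rw [Finset.mul_sum, Finset.sum_eq_single l]
      · rw [mul_smul_comm]
      · intro i _ hi
        rw [mul_smul_comm, hbb l i hi.symm, smul_zero]
      · simp
    rw [← mul_assoc, hl, smul_mul_assoc, mul_assoc, hl, mul_smul_comm, smul_smul] at e2
    refine (smul_eq_zero.1 e2).resolve_right ?_
    intro h3
    apply hb0 l
    have : b l * (b l * b l) * b l ^ (m - 2) = b l := by
      rw [← pow_two, ← pow_succ', ← pow_add, show 2 + 1 + (m - 2) = m + 1 by omega, hbp]
    rw [← this, h3, zero_mul]
  have h3 : ∀ j, ∃ i, w i j ≠ 0 := by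
    intro j
    by_contra! hz
    have e1 := hw j
    simp only [hz, zero_smul, Finset.sum_const_zero] at e1
    apply hb0 j
    have : h' * (h * b j * h') * h = b j := by
      rw [show h' * (h * b j * h') * h = (h' * h) * b j * (h' * h) by simp only [mul_assoc], hh']
      simp
    rw [← this, e1, mul_zero, zero_mul]
  choose f hf using h3
  have hinj : Function.Injective f := by
    intro j j' hjj
    by_contra hne
    have := h2 (f j) j j' hne
    rcases mul_eq_zero.1 this with h | h
    · exact hf j h
    · rw [hjj] at h; exact hf j' h
  have hbij := Finite.injective_iff_bijective.1 hinj
  refine ⟨Equiv.ofBijective f hbij, ?_, ?_⟩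
  · intro i j hij
    obtain ⟨j', rfl⟩ := hbij.2 i
    have hjj : j' ≠ j := by
      rintro rfl; exact hij rfl
    exact (mul_eq_zero.1 (h2 (f j') j' j hjj)).resolve_left (hf j')
  · intro j
    have := h1 (f j) j
    rw [pow_succ] at this
    exact mul_right_cancel₀ (hf j) (by rw [one_mul]; exact this)
end partF
section partG
variable {k : Type*} [Field k] {N : Type*} [Fintype N] [DecidableEq N]

/-- the ambient data -/
structure Setup (θ : Matrix N N k ≃ₐ[k] Matrix N N k) (τ : Matrix N N k →ₗ[k] Matrix N N k) (m : ℕ)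
    (u ui J : Matrix N N k) : Prop where
  uui : u * ui = 1
  uiu : ui * u = 1
  th : ∀ x, θ x = ui * x * u
  thm : θ ^ m = 1
  ta : ∀ x, τ x = J * xᵀ * J
  Jt : Jᵀ = J
  JJ : J * J = 1
  tu : τ u = ui

variable {θ : Matrix N N k ≃ₐ[k] Matrix N N k} {τ : Matrix N N k →ₗ[k] Matrix N N k} {m : ℕ}
    {u ui J : Matrix N N k}

theorem Setup.tau_mul (S : Setup θ τ m u ui J) (x y : Matrix N N k) : τ (x * y) = τ y * τ x := by
  rw [S.ta, S.ta, S.ta, Matrix.transpose_mul]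
  rw [show J * yᵀ * J * (J * xᵀ * J) = J * yᵀ * (J * J) * xᵀ * J by simp only [Matrix.mul_assoc], S.JJ]
  simp [Matrix.mul_assoc]

theorem Setup.tau_one (S : Setup θ τ m u ui J) : τ 1 = 1 := by
  rw [S.ta, Matrix.transpose_one, Matrix.mul_one, S.JJ]

theorem Setup.tau_tau (S : Setup θ τ m u ui J) (x : Matrix N N k) : τ (τ x) = x := by
  rw [S.ta, S.ta, Matrix.transpose_mul, Matrix.transpose_mul, S.Jt, Matrix.transpose_transpose]
  rw [show J * (J * (x * J)) * J = J * J * x * (J * J) by simp only [Matrix.mul_assoc], S.JJ]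
  simp

theorem Setup.det_tau (S : Setup θ τ m u ui J) (x : Matrix N N k) : (τ x).det = x.det := by
  have h : J.det * J.det = 1 := by rw [← Matrix.det_mul, S.JJ, Matrix.det_one]
  rw [S.ta, Matrix.det_mul, Matrix.det_mul, Matrix.det_transpose, mul_right_comm, h, one_mul]

theorem Setup.det_th (S : Setup θ τ m u ui J) (x : Matrix N N k) : (θ x).det = x.det := by
  have h : ui.det * u.det = 1 := by rw [← Matrix.det_mul, S.uiu, Matrix.det_one]
  rw [S.th, Matrix.det_mul, Matrix.det_mul, mul_right_comm, h, one_mul]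

theorem Setup.det_th_pow (S : Setup θ τ m u ui J) (j : ℕ) (x : Matrix N N k) :
    ((θ ^ j) x).det = x.det := by
  induction j with
  | zero => rfl
  | succ j ih => rw [add_comm, th_add, pow_one, S.det_th, ih]

theorem Setup.tu' (S : Setup θ τ m u ui J) : τ ui = u := by rw [← S.tu, S.tau_tau]

theorem Setup.tau_th (S : Setup θ τ m u ui J) (x : Matrix N N k) : τ (θ x) = θ (τ x) := by
  rw [S.th, S.th, S.tau_mul, S.tau_mul, S.tu, S.tu', Matrix.mul_assoc]

theorem Setup.th_pow (S : Setup θ τ m u ui J) (j : ℕ) (x : Matrix N N k) :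
    (θ ^ j) x = ui ^ j * x * u ^ j := by
  induction j with
  | zero => simp
  | succ j ih =>
    rw [add_comm, th_add, pow_one, ih, S.th, pow_add, pow_add, pow_one, pow_one]
    simp only [mul_assoc]
    rw [← pow_succ, ← pow_succ']

theorem Setup.th_fix (S : Setup θ τ m u ui J) {h : Matrix N N k} : θ h = h ↔ h * u = u * h := by
  rw [S.th]
  constructor
  · intro e
    calc h * u = (u * ui) * h * u := by rw [S.uui, one_mul]
      _ = u * (ui * h * u) := by simp only [mul_assoc]
      _ = u * h := by rw [e]
  · intro e
    rw [mul_assoc, e, ← mul_assoc, S.uiu, one_mul]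

theorem Setup.th_pow_fix {h : Matrix N N k} (e : θ h = h) (j : ℕ) : (θ ^ j) h = h := by
  induction j with
  | zero => rfl
  | succ j ih => rw [add_comm, th_add, pow_one, ih, e]

theorem Setup.det_refl (S : Setup θ τ m u ui J) (hm : Even m) {q : Matrix N N k} (hq : q * q = q)
    (ho : Orth θ m q q) : (1 - (2 : k) • Phi θ m 1 q).det = 1 := by
  obtain ⟨a, ha⟩ := hm
  set G := Phi θ a 1 q with hG
  have hoG : Orth θ a q q := fun j h1 h2 => ho j h1 (by omega)
  have h1 : Phi θ m 1 q = G + (θ ^ a) G := by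
    rw [hG]
    unfold Phi
    rw [ha, Finset.sum_range_add]
    simp only [one_pow, one_smul, map_sum, th_add]
  have hmul : ∀ i j, i < m → j < m → (θ ^ i) q * (θ ^ j) q = if i = j then (θ ^ i) q else 0 := by
    intro i j hi hj
    split_ifs with hij
    · subst hij; rw [← map_mul, hq]
    · rcases lt_or_gt_of_ne hij with h | h
      · have : j = i + (j - i) := by omega
        rw [this, th_add, ← map_mul, ho _ (by omega) (by omega), map_zero]
      · have : i = j + (i - j) := by omega
        rw [this, th_add, ← map_mul, ho.symm_mul S.thm _ (by omega) (by omega), map_zero]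
  have hGG : G * G = G := by
    rw [hG]
    unfold Phi
    rw [Finset.sum_mul]
    apply Finset.sum_congr rfl
    intro i hi
    rw [Finset.mem_range] at hi
    rw [Finset.mul_sum, Finset.sum_eq_single i]
    · simp only [one_pow, one_smul]; rw [hmul _ _ (by omega) (by omega), if_pos rfl]
    · intro j hj hji
      rw [Finset.mem_range] at hj
      simp only [one_pow, one_smul]; rw [hmul _ _ (by omega) (by omega), if_neg hji.symm]
    · intro h; exact absurd (Finset.mem_range.2 hi) h
  have hGG' : G * (θ ^ a) G = 0 := by
    rw [hG]
    unfold Phi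
    rw [Finset.sum_mul]
    apply Finset.sum_eq_zero
    intro i hi
    rw [Finset.mem_range] at hi
    rw [map_sum, Finset.mul_sum]
    apply Finset.sum_eq_zero
    intro j hj
    rw [Finset.mem_range] at hj
    simp only [one_pow, one_smul]
    rw [← th_add, hmul _ _ (by omega) (by omega), if_neg (by omega)]
  have h3 : 1 - (2 : k) • Phi θ m 1 q = (1 - (2 : k) • G) * (θ ^ a) (1 - (2 : k) • G) := by
    rw [h1, map_sub, map_smul, map_one, sub_mul, one_mul, smul_mul_assoc, mul_sub, mul_one,
      mul_smul_comm, hGG', smul_zero, sub_zero, smul_add]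
    abel
  have h4 : (1 - (2 : k) • G) * (1 - (2 : k) • G) = 1 := by
    rw [sub_mul, one_mul, smul_mul_assoc, mul_sub, mul_one, mul_smul_comm, hGG, smul_sub, smul_smul]
    module
  rw [h3, Matrix.det_mul, S.det_th_pow, ← Matrix.det_mul, h4, Matrix.det_one]

/-- realizability of a monomial transformation -/
def Rz (τ : Matrix N N k →ₗ[k] Matrix N N k) (u : Matrix N N k) {r : ℕ} (b : Fin r → Matrix N N k)
    (σ : Equiv.Perm (Fin r)) (t : Fin r → k) (d : k) : Prop :=
  ∃ h : Matrix N N k, τ h * h = 1 ∧ h * u = u * h ∧ h.det = d ∧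
    ∀ j, h * b j = t j • (b (σ j) * h)

theorem Rz.comp (S : Setup θ τ m u ui J) {r : ℕ} {b : Fin r → Matrix N N k}
    {σ σ' : Equiv.Perm (Fin r)} {t t' : Fin r → k} {d d' : k} (h1 : Rz τ u b σ t d)
    (h2 : Rz τ u b σ' t' d') :
    Rz τ u b (σ * σ') (fun j => t' j * t (σ' j)) (d * d') := by
  obtain ⟨h, a1, a2, a3, a4⟩ := h1
  obtain ⟨g, b1, b2, b3, b4⟩ := h2
  refine ⟨h * g, ?_, ?_, ?_, ?_⟩
  · rw [S.tau_mul, show τ g * τ h * (h * g) = τ g * (τ h * h) * g by simp only [mul_assoc], a1,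
      mul_one, b1]
  · rw [mul_assoc, b2, ← mul_assoc, a2, mul_assoc]
  · rw [Matrix.det_mul, a3, b3]
  · intro j
    rw [mul_assoc, b4, mul_smul_comm, ← mul_assoc, a4, smul_mul_assoc, smul_smul, mul_assoc]
    rfl

theorem Rz.one (S : Setup θ τ m u ui J) {r : ℕ} (b : Fin r → Matrix N N k) :
    Rz τ u b 1 (fun _ => 1) 1 :=
  ⟨1, by rw [S.tau_one, one_mul], by simp, by simp, by simp⟩

theorem Setup.det_of_neg (S : Setup θ τ m u ui J) [IsAlgClosed k] (h2 : (2 : k) ≠ 0)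
    (hm : Even m) (hu : u ^ m = -1)
    (h : Matrix N N k) (hh : τ h * h = 1) (hc : h * u = u * h) : h.det = 1 := by
  obtain ⟨a, ha⟩ := hm
  obtain ⟨ι, hι⟩ := IsAlgClosed.exists_pow_nat_eq (-1 : k) (n := 2) (by norm_num)
  set K := u ^ a with hK
  have hKK : K * K = -1 := by rw [hK, ← pow_add, ← ha, hu]
  have hτpow : ∀ j : ℕ, τ (u ^ j) * u ^ j = 1 := by
    intro j
    induction j with
    | zero => rw [pow_zero, S.tau_one, one_mul]
    | succ j ih =>
      rw [pow_succ', S.tau_mul, S.tu, show τ (u ^ j) * ui * (u * u ^ j) =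
        τ (u ^ j) * (ui * u) * u ^ j by simp only [mul_assoc], S.uiu, mul_one, ih]
  have hτK : τ K = -K := by
    have h1 := hτpow a
    have h3 := congrArg (fun z => z * K) h1
    rw [← hK, mul_assoc, hKK, one_mul, mul_neg, mul_one] at h3
    rw [eq_neg_iff_add_eq_zero, ← neg_eq_iff_add_eq_zero, h3]
  have hhK : h * K = K * h := ((show Commute h u from hc).pow_right a).eq
  set p : Matrix N N k := (2 : k)⁻¹ • (1 + ι • K) with hp
  have hpp : p * p = p := by
    have : (1 + ι • K) * (1 + ι • K) = (2 : k) • (1 + ι • K) := by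
      rw [add_mul, one_mul, mul_add, mul_one, smul_mul_smul_comm, hKK, ← pow_two, hι]
      module
    rw [hp, smul_mul_smul_comm, this, smul_smul]
    congr 1
    field_simp
  have hτp : τ p = 1 - p := by
    have h3 : p + τ p = 1 := by
      rw [hp, map_smul, map_add, map_smul, S.tau_one, hτK, ← smul_add]
      have : (1 + ι • K + (1 + ι • -K)) = (2 : k) • (1 : Matrix N N k) := by module
      rw [this, smul_smul, inv_mul_cancel₀ h2, one_smul]
    rw [← h3]; abel
  have hhp : h * p = p * h := by
    rw [hp, mul_smul_comm, smul_mul_assoc, mul_add, add_mul, mul_smul_comm, smul_mul_assoc, hhK,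
      mul_one, one_mul]
  have hh' : h * τ h = 1 := mul_eq_one_comm.1 hh
  have e1 : h = (h * p + (1 - p)) * (p + h * (1 - p)) := by
    have x1 : h * p * p = h * p := by rw [mul_assoc, hpp]
    have x2 : p * (h * (1 - p)) = 0 := by
      rw [← mul_assoc, ← hhp, mul_assoc, mul_sub, mul_one, hpp, sub_self, mul_zero]
    rw [add_mul, mul_add, x1, mul_assoc h p, x2, sub_mul, one_mul, mul_add, hpp, x2]
    simp only [mul_sub, mul_one, mul_zero]
    abel
  have e2 : τ (p + h * (1 - p)) = (1 - p) + p * τ h := by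
    rw [map_add, S.tau_mul, hτp, map_sub, S.tau_one, hτp, sub_sub_cancel]
  have e3 : (h * p + (1 - p)) * ((1 - p) + p * τ h) = 1 := by
    have x1 : h * p * (1 - p) = 0 := by rw [mul_assoc, mul_sub, mul_one, hpp, sub_self, mul_zero]
    have x2 : h * p * (p * τ h) = p := by
      rw [hhp, mul_assoc, ← mul_assoc h p, hhp, mul_assoc p h, hh', mul_one, hpp]
    have x3 : (1 - p) * (1 - p) = 1 - p := by
      rw [sub_mul, one_mul, mul_sub, mul_one, hpp, sub_self, sub_zero]
    have x4 : (1 - p) * (p * τ h) = 0 := by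
      rw [← mul_assoc, sub_mul, one_mul, hpp, sub_self, zero_mul]
    rw [add_mul, mul_add, mul_add, x1, x2, x3, x4]
    abel
  calc h.det = (h * p + (1 - p)).det * (p + h * (1 - p)).det := by
        rw [← Matrix.det_mul, ← e1]
    _ = (h * p + (1 - p)).det * ((1 - p) + p * τ h).det := by rw [← e2, S.det_tau]
    _ = 1 := by rw [← Matrix.det_mul, e3, Matrix.det_one]
end partG
section partH
variable {k : Type*} [Field k] {N : Type*} [Fintype N] [DecidableEq N]
variable {θ : Matrix N N k ≃ₐ[k] Matrix N N k} {τ : Matrix N N k →ₗ[k] Matrix N N k} {m : ℕ}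
    {u ui J : Matrix N N k} {ζ : k} {c : Submodule k (Matrix N N k)} {r d : ℕ}
    {e : Fin r → Matrix N N k} {X : Fin r → Matrix N (Fin d) k} {Y : Fin r → Matrix (Fin d) N k}

theorem Orth.add_left {p p' q : Matrix N N k} (h : Orth θ m p q) (h' : Orth θ m p' q) :
    Orth θ m (p + p') q := by
  intro j h1 h2
  rw [add_mul, h j h1 h2, h' j h1 h2, add_zero]

theorem Orth.add_right {p q q' : Matrix N N k} (h : Orth θ m p q) (h' : Orth θ m p q') :
    Orth θ m p (q + q') := by
  intro j h1 h2
  rw [map_add, mul_add, h j h1 h2, h' j h1 h2, add_zero]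

theorem CData2.yx0 (D : CData θ τ m ζ c r e) (D2 : CData2 θ τ m r d e X Y) {i l : Fin r}
    (h : i ≠ l) : Y i * X l = 0 := by
  have : Y i * (e i * e l) * X l = Y i * X l := by
    rw [← D2.xy, ← D2.xy, show Y i * (X i * Y i * (X l * Y l)) * X l =
      (Y i * X i) * (Y i * X l) * (Y l * X l) by simp only [Matrix.mul_assoc], D2.yx, D2.yx,
      Matrix.one_mul, Matrix.mul_one]
  rw [← this, D.orth' i l h, Matrix.mul_zero, Matrix.zero_mul]

theorem CData2.mul_unit (D2 : CData2 θ τ m r d e X Y) (i l j : Fin r) :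
    X i * Y l * (X l * Y j) = X i * Y j := by
  rw [show X i * Y l * (X l * Y j) = X i * (Y l * X l) * Y j by simp only [Matrix.mul_assoc], D2.yx,
    Matrix.mul_one]

theorem CData2.mul_unit0 (D : CData θ τ m ζ c r e) (D2 : CData2 θ τ m r d e X Y) (i j : Fin r)
    {l l' : Fin r} (h : l ≠ l') : X i * Y l * (X l' * Y j) = 0 := by
  rw [show X i * Y l * (X l' * Y j) = X i * (Y l * X l') * Y j by simp only [Matrix.mul_assoc],
    CData2.yx0 D D2 h, Matrix.mul_zero, Matrix.zero_mul]

theorem rz_swap (S : Setup θ τ m u ui J) (hm : Even m) (h2 : (2 : k) ≠ 0)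
    (D : CData θ τ m ζ c r e) (D2 : CData2 θ τ m r d e X Y) {i l : Fin r} (hil : i ≠ l) :
    Rz τ u (fun i => Phi θ m ζ (e i)) (Equiv.swap i l) (fun _ => 1) 1 := by
  have hli := hil.symm
  obtain ⟨q', hq'⟩ : ∃ q' : Matrix N N k, q' = X i * Y i + X l * Y l - X i * Y l - X l * Y i :=
    ⟨_, rfl⟩
  obtain ⟨f, hf⟩ : ∃ f : Matrix N N k, f = X i * Y i + X l * Y l := ⟨_, rfl⟩
  have M := D2.mul_unit
  have M0 : ∀ (i j : Fin r) {l l' : Fin r} (_ : l ≠ l'), X i * Y l * (X l' * Y j) = 0 :=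
    fun i j _ _ h => CData2.mul_unit0 D D2 i j h
  have hqq' : q' * q' = (2 : k) • q' := by
    rw [hq']
    simp only [mul_add, add_mul, mul_sub, sub_mul, M, M0 _ _ hil, M0 _ _ hli]
    module
  have hqf : q' * f = q' := by
    rw [hq', hf]
    simp only [mul_add, add_mul, sub_mul, M, M0 _ _ hil, M0 _ _ hli]
    module
  have hfq : f * q' = q' := by
    rw [hq', hf]
    simp only [mul_add, add_mul, mul_sub, M, M0 _ _ hil, M0 _ _ hli]
    module
  have hff : ∀ j, Orth θ m f (e j) := by
    intro j
    rw [hf, D2.xy, D2.xy]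
    exact (D.orth i j).add_left (D.orth l j)
  have hff' : ∀ j, Orth θ m (e j) f := by
    intro j
    rw [hf, D2.xy, D2.xy]
    exact (D.orth j i).add_right (D.orth j l)
  have hfff : Orth θ m f f := by
    have := (hff i).add_right (hff l)
    rwa [← D2.xy, ← D2.xy, ← hf] at this
  have o1 : Orth θ m q' q' := hfff.of_mul hqf hfq
  have o2 : ∀ j, Orth θ m q' (e j) := fun j => (hff j).of_mul hqf (D.idem j)
  have o3 : ∀ j, Orth θ m (e j) q' := fun j => (hff' j).of_mul (D.idem j) hfq
  have hτq : τ q' = (θ ^ (m / 2)) q' := by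
    rw [hq', map_sub, map_sub, map_add, D2.tau, D2.tau, D2.tau, D2.tau, map_sub, map_sub, map_add]
    abel
  have hQ1 : θ (Phi θ m 1 q') = Phi θ m 1 q' := by
    have := Phi_theta S.thm (one_pow m) q'
    rwa [one_smul] at this
  have hQ2 : τ (Phi θ m 1 q') = Phi θ m 1 q' := by
    have := Phi_tau_half S.thm S.tau_th (one_pow m) hτq
    rwa [one_pow, one_smul] at this
  have hQ3 : Phi θ m 1 q' * Phi θ m 1 q' = (2 : k) • Phi θ m 1 q' := by
    rw [Phi_mul S.thm _ _ o1, one_mul, hqq', Phi_smul]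
  refine ⟨1 - Phi θ m 1 q', ?_, ?_, ?_, ?_⟩
  · rw [map_sub, S.tau_one, hQ2, sub_mul, one_mul, mul_sub, mul_one, hQ3]
    module
  · rw [← S.th_fix, map_sub, map_one, hQ1]
  · have h3 : Phi θ m 1 q' = (2 : k) • Phi θ m 1 ((2 : k)⁻¹ • q') := by
      rw [Phi_smul, smul_smul, mul_inv_cancel₀ h2, one_smul]
    rw [h3]
    apply S.det_refl hm
    · rw [smul_mul_smul_comm, hqq', smul_smul]
      congr 1
      field_simp
    · intro j h4 h5
      rw [map_smul, smul_mul_smul_comm, o1 j h4 h5, smul_zero]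
  · intro j
    simp only [one_smul]
    rw [sub_mul, one_mul, mul_sub, mul_one, Phi_mul S.thm _ _ (o2 j), Phi_mul S.thm _ _ (o3 _),
      one_mul, mul_one]
    have key : e j - q' * e j = e (Equiv.swap i l j) - e (Equiv.swap i l j) * q' := by
      by_cases h1 : j = i
      · subst h1
        rw [Equiv.swap_apply_left, hq', ← D2.xy, ← D2.xy]
        simp only [mul_add, add_mul, mul_sub, sub_mul, M, M0 _ _ hil, M0 _ _ hli]
        abel
      · by_cases h1' : j = l
        · subst h1'
          rw [Equiv.swap_apply_right, hq', ← D2.xy, ← D2.xy]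
          simp only [mul_add, add_mul, mul_sub, sub_mul, M, M0 _ _ hil, M0 _ _ hli]
          abel
        · rw [Equiv.swap_apply_of_ne_of_ne h1 h1', hq', ← D2.xy]
          simp only [mul_add, add_mul, mul_sub, sub_mul, M0 _ _ h1, M0 _ _ h1',
            M0 _ _ (Ne.symm h1), M0 _ _ (Ne.symm h1')]
    have hs : ∀ a b : Matrix N N k, Phi θ m ζ a - Phi θ m ζ b = Phi θ m ζ (a - b) := by
      intro a b
      rw [sub_eq_add_neg a b, Phi_add, ← neg_one_smul k b, Phi_smul]
      module
    rw [hs, hs, key]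

theorem rz_perm (S : Setup θ τ m u ui J) (hm : Even m) (h2 : (2 : k) ≠ 0)
    (D : CData θ τ m ζ c r e) (D2 : CData2 θ τ m r d e X Y) (σ : Equiv.Perm (Fin r)) :
    Rz τ u (fun i => Phi θ m ζ (e i)) σ (fun _ => 1) 1 := by
  induction σ using Equiv.Perm.swap_induction_on with
  | one => exact Rz.one S _
  | swap_mul σ x y hxy ih =>
    have := (rz_swap S hm h2 D D2 hxy).comp S ih
    simpa using this

/-- the element acting as `u` on one block -/
def Dh (θ : Matrix N N k ≃ₐ[k] Matrix N N k) (m : ℕ) (u p : Matrix N N k) : Matrix N N k :=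
  1 - Phi θ m 1 p + u * Phi θ m 1 p

theorem Dh_props (S : Setup θ τ m u ui J) (hζ : IsPrimitiveRoot ζ m)
    (D : CData θ τ m ζ c r e) (i : Fin r) :
    τ (Dh θ m u (e i)) * Dh θ m u (e i) = 1 ∧ Dh θ m u (e i) * u = u * Dh θ m u (e i) ∧
    ∀ j, Dh θ m u (e i) * Phi θ m ζ (e j) =
      (if j = i then ζ else 1) • (Phi θ m ζ (e j) * Dh θ m u (e i)) := by
  unfold Dh
  set F := Phi θ m 1 (e i) with hF
  have hQ1 : θ F = F := by
    have := Phi_theta S.thm (one_pow m) (e i)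
    rwa [one_smul] at this
  have hFu : F * u = u * F := S.th_fix.1 hQ1
  have hFui : ui * F = F * ui := by
    calc ui * F = ui * (F * u) * ui := by rw [mul_assoc, mul_assoc, S.uui, mul_one]
      _ = F * ui := by rw [hFu, ← mul_assoc, S.uiu, one_mul]
  have hQ2 : τ F = F := by
    have := Phi_tau_half S.thm S.tau_th (one_pow m) (D.tau i)
    rwa [one_pow, one_smul] at this
  have hFF : F * F = F := by
    rw [hF, Phi_mul S.thm _ _ (D.orth i i), one_mul, D.idem]
  have hFF' : (1 - F) * F = 0 := by rw [sub_mul, one_mul, hFF, sub_self]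
  have hFF'' : F * (1 - F) = 0 := by rw [mul_sub, mul_one, hFF, sub_self]
  refine ⟨?_, ?_, ?_⟩
  · rw [map_add, map_sub, S.tau_one, S.tau_mul, hQ2, S.tu, ← hFu, add_mul, mul_add, mul_add]
    rw [show (1 - F) * (1 - F) = 1 - F by rw [mul_sub, mul_one, hFF', sub_zero],
      ← mul_assoc, hFF', zero_mul, ← hFui, mul_assoc, hFF'',
      show ui * F * (F * u) = ui * (F * F) * u by simp only [mul_assoc], hFF,
      mul_assoc, hFu, ← mul_assoc, S.uiu]
    simp
  · rw [add_mul, mul_add, sub_mul, mul_sub, mul_one, one_mul, hFu, mul_assoc, hFu]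
  · intro j
    by_cases hj : j = i
    · subst hj
      rw [if_pos rfl]
      set b := Phi θ m ζ (e j) with hb
      have h1 : F * b = b := by
        rw [hF, hb, Phi_mul S.thm _ _ (D.orth j j), one_mul, D.idem]
      have h1' : b * F = b := by
        rw [hF, hb, Phi_mul S.thm _ _ (D.orth j j), mul_one, D.idem]
      have h3 : ζ • θ b = b := Phi_theta S.thm hζ.pow_eq_one _
      have h4 : ζ • (b * u) = u * b := by
        rw [S.th] at h3
        calc ζ • (b * u) = ζ • ((u * ui) * b * u) := by rw [S.uui, one_mul]
          _ = u * (ζ • (ui * b * u)) := by simp only [mul_assoc, mul_smul_comm]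
          _ = u * b := by rw [h3]
      rw [add_mul, mul_add, sub_mul, mul_sub, mul_assoc, h1, one_mul, mul_one, h1', sub_self,
        zero_add, zero_add, ← mul_assoc, ← smul_mul_assoc, h4, mul_assoc, h1']
    · rw [if_neg hj, one_smul]
      set b := Phi θ m ζ (e j) with hb
      have h1 : F * b = 0 := by
        rw [hF, hb, Phi_mul S.thm _ _ (D.orth i j), D.orth' i j (Ne.symm hj), Phi_zero]
      have h1' : b * F = 0 := by
        rw [hF, hb, Phi_mul S.thm _ _ (D.orth j i), D.orth' j i hj, Phi_zero]
      rw [← hFu, add_mul, mul_add, sub_mul, mul_sub, ← mul_assoc b F, h1', hFu, mul_assoc, h1]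
      simp

theorem rz_diag (S : Setup θ τ m u ui J) (hm : 0 < m) (hζ : IsPrimitiveRoot ζ m)
    (D : CData θ τ m ζ c r e) (s : ℕ) (hs : ∀ i, (Dh θ m u (e i)).det = ζ ^ s)
    (t : Fin r → k) (ht : ∀ i, t i ^ m = 1) :
    Rz τ u (fun i => Phi θ m ζ (e i)) 1 t ((∏ i, t i) ^ s) := by
  have h1 : ∀ (i : Fin r) (a : ℕ), Rz τ u (fun i => Phi θ m ζ (e i)) 1
      (fun j => if j = i then ζ ^ a else 1) ((ζ ^ a) ^ s) := by
    intro i a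
    induction a with
    | zero => simpa using Rz.one S _
    | succ a ih =>
      obtain ⟨p1, p2, p3⟩ := Dh_props S hζ D i
      have h2 : Rz τ u (fun i => Phi θ m ζ (e i)) 1 (fun j => if j = i then ζ else 1) (ζ ^ s) :=
        ⟨_, p1, p2, hs i, p3⟩
      have h3 := ih.comp S h2
      rw [mul_one] at h3
      convert h3 using 1
      · funext j
        rw [Equiv.Perm.one_apply]
        split_ifs <;> simp [pow_succ']
      · rw [pow_succ, mul_pow]
  have h4 : ∀ A : Finset (Fin r), Rz τ u (fun i => Phi θ m ζ (e i)) 1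
      (fun j => if j ∈ A then t j else 1) ((∏ i ∈ A, t i) ^ s) := by
    intro A
    induction A using Finset.induction_on with
    | empty => simpa using Rz.one S _
    | insert i A hi ih =>
      have : NeZero m := ⟨hm.ne'⟩
      obtain ⟨a, _, ha⟩ := hζ.eq_pow_of_pow_eq_one (ht i)
      have h3 := (h1 i a).comp S ih
      rw [mul_one] at h3
      convert h3 using 1
      · funext j
        rw [Equiv.Perm.one_apply]
        by_cases hj : j = i
        · subst hj; simp [hi, ha]
        · simp [hj]
      · rw [Finset.prod_insert hi, mul_pow, ha]
  simpa using h4 Finset.univ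

theorem rz_all (S : Setup θ τ m u ui J) (hm0 : 0 < m) (hm : Even m) (h2 : (2 : k) ≠ 0)
    (hζ : IsPrimitiveRoot ζ m)
    (D : CData θ τ m ζ c r e) (D2 : CData2 θ τ m r d e X Y)
    (s : ℕ) (hs : ∀ i, (Dh θ m u (e i)).det = ζ ^ s) (σ : Equiv.Perm (Fin r))
    (t : Fin r → k) (ht : ∀ i, t i ^ m = 1) :
    Rz τ u (fun i => Phi θ m ζ (e i)) σ t ((∏ i, t i) ^ s) := by
  simpa using (rz_perm S hm h2 D D2 σ).comp S (rz_diag S hm0 hζ D s hs t ht)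
end partH
section partI
variable {k : Type*} [Field k] {N : Type*} [Fintype N] [DecidableEq N]
variable {θ : Matrix N N k ≃ₐ[k] Matrix N N k} {τ : Matrix N N k →ₗ[k] Matrix N N k} {m : ℕ}
    {u ui J : Matrix N N k} {ζ : k} {c : Submodule k (Matrix N N k)} {r d : ℕ}
    {e : Fin r → Matrix N N k} {X : Fin r → Matrix N (Fin 1) k} {Y : Fin r → Matrix (Fin 1) N k}

theorem Setup.pow_pow (S : Setup θ τ m u ui J) (j : ℕ) : u ^ j * ui ^ j = 1 := by
  have h : Commute u ui := by rw [Commute, SemiconjBy, S.uui, S.uiu]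
  rw [← h.mul_pow, S.uui, one_pow]

theorem yux (S : Setup θ τ m u ui J) (D : CData θ τ m ζ c r e) (D2 : CData2 θ τ m r 1 e X Y)
    (i l : Fin r) (a b : ℕ) (ha : a < m) (hb : b < m) :
    Y i * (u ^ a * ui ^ b) * X l = if i = l ∧ a = b then 1 else 0 := by
  have h0 : Y i * (e i * (u ^ a * ui ^ b) * e l) * X l = Y i * (u ^ a * ui ^ b) * X l := by
    rw [← D2.xy, ← D2.xy, show Y i * (X i * Y i * (u ^ a * ui ^ b) * (X l * Y l)) * X l =
      (Y i * X i) * (Y i * (u ^ a * ui ^ b) * X l) * (Y l * X l) by simp only [Matrix.mul_assoc],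
      D2.yx, D2.yx, Matrix.one_mul, Matrix.mul_one]
  rcases lt_trichotomy a b with h | h | h
  · rw [if_neg (by omega), ← h0]
    have h1 : u ^ a * ui ^ b = ui ^ (b - a) := by
      rw [show b = a + (b - a) by omega, pow_add, ← mul_assoc, S.pow_pow, one_mul]
      congr 1; omega
    have h2 := D.orth i l (b - a) (by omega) (by omega)
    rw [S.th_pow] at h2
    have h3 : e i * ui ^ (b - a) * e l = 0 := by
      have : e i * (ui ^ (b - a) * e l * u ^ (b - a)) * ui ^ (b - a) = e i * ui ^ (b - a) * e l := by
        simp only [mul_assoc]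
        rw [S.pow_pow, mul_one]
      rw [← this, h2, zero_mul]
    rw [h1, h3, Matrix.mul_zero, Matrix.zero_mul]
  · subst h
    rw [S.pow_pow, Matrix.mul_one]
    by_cases hil : i = l
    · subst hil; rw [D2.yx, if_pos ⟨rfl, rfl⟩]
    · rw [if_neg (fun h => hil h.1), CData2.yx0 D D2 hil]
  · rw [if_neg (by omega), ← h0]
    have h1 : u ^ a * ui ^ b = u ^ (a - b) := by
      rw [show a = (a - b) + b by omega, pow_add, mul_assoc, S.pow_pow, mul_one]
      congr 1; omega
    have h2 := (D.orth i l).symm_mul S.thm (a - b) (by omega) (by omega)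
    rw [S.th_pow] at h2
    have h3 : e i * u ^ (a - b) * e l = 0 := by
      have : u ^ (a - b) * (ui ^ (a - b) * e i * u ^ (a - b) * e l) = e i * u ^ (a - b) * e l := by
        simp only [← mul_assoc]
        rw [S.pow_pow, one_mul]
      rw [← this, h2, mul_zero]
    rw [h1, h3, Matrix.mul_zero, Matrix.zero_mul]

/-- big column matrix -/
def bigC (m : ℕ) (ui : Matrix N N k) (X : Fin r → Matrix N (Fin 1) k) :
    Matrix N (Fin r × Fin m) k :=
  Matrix.of fun v p => (ui ^ (p.2 : ℕ) * X p.1) v 0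

/-- big row matrix -/
def bigR (m : ℕ) (u : Matrix N N k) (Y : Fin r → Matrix (Fin 1) N k) :
    Matrix (Fin r × Fin m) N k :=
  Matrix.of fun p v => (Y p.1 * u ^ (p.2 : ℕ)) 0 v

theorem bigRC (S : Setup θ τ m u ui J) (D : CData θ τ m ζ c r e) (D2 : CData2 θ τ m r 1 e X Y) :
    bigR m u Y * bigC m ui X = 1 := by
  ext ⟨i, a⟩ ⟨l, b⟩
  have h := congrFun (congrFun (yux S D D2 i l a b a.2 b.2) 0) 0
  have h1 : (bigR m u Y * bigC m ui X) (i, a) (l, b) =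
      (Y i * (u ^ (a : ℕ) * ui ^ (b : ℕ)) * X l) 0 0 := by
    rw [show Y i * (u ^ (a : ℕ) * ui ^ (b : ℕ)) * X l = (Y i * u ^ (a : ℕ)) * (ui ^ (b : ℕ) * X l) by
      simp only [Matrix.mul_assoc], Matrix.mul_apply, Matrix.mul_apply]
    rfl
  rw [h1, h, Matrix.one_apply]
  by_cases hh : i = l ∧ (a : ℕ) = b
  · obtain ⟨rfl, h3⟩ := hh
    have h3 := Fin.ext h3
    subst h3
    simp
  · rw [if_neg hh, if_neg (by
      intro h3
      rw [Prod.mk.injEq] at h3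
      exact hh ⟨h3.1, by rw [h3.2]⟩)]
    rfl

theorem bigCR (S : Setup θ τ m u ui J) (D2 : CData2 θ τ m r 1 e X Y) :
    bigC m ui X * bigR m u Y = ∑ i, Phi θ m 1 (e i) := by
  ext v w
  rw [Matrix.mul_apply, Fintype.sum_prod_type, Matrix.sum_apply]
  apply Finset.sum_congr rfl
  intro i _
  unfold Phi
  rw [Matrix.sum_apply, ← Fin.sum_univ_eq_sum_range (fun j => (((1 : k) ^ j) • (θ ^ j) (e i)) v w)]
  apply Finset.sum_congr rfl
  intro a _
  rw [one_pow, one_smul, S.th_pow, ← D2.xy, show ui ^ (a : ℕ) * (X i * Y i) * u ^ (a : ℕ) =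
    (ui ^ (a : ℕ) * X i) * (Y i * u ^ (a : ℕ)) by simp only [Matrix.mul_assoc], Matrix.mul_apply]
  simp [bigC, bigR]

theorem det_Dh (S : Setup θ τ m u ui J) (hm : 0 < m) (hme : Even m) (hu : u ^ m = 1)
    (D : CData θ τ m ζ c r e) (D2 : CData2 θ τ m r 1 e X Y) (i : Fin r) :
    (Dh θ m u (e i)).det = -1 := by
  obtain ⟨m', rfl⟩ : ∃ m', m = m' + 1 := ⟨m - 1, by omega⟩
  set C : Matrix N (Fin (m' + 1)) k := Matrix.of fun v a => (ui ^ (a : ℕ) * X i) v 0 with hC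
  set R : Matrix (Fin (m' + 1)) N k := Matrix.of fun a v => (Y i * u ^ (a : ℕ)) 0 v with hR
  have hCR : C * R = Phi θ (m' + 1) 1 (e i) := by
    ext v w
    rw [Matrix.mul_apply]
    unfold Phi
    rw [Matrix.sum_apply,
      ← Fin.sum_univ_eq_sum_range (fun j => (((1 : k) ^ j) • (θ ^ j) (e i)) v w)]
    apply Finset.sum_congr rfl
    intro a _
    rw [one_pow, one_smul, S.th_pow, ← D2.xy, show ui ^ (a : ℕ) * (X i * Y i) * u ^ (a : ℕ) =
      (ui ^ (a : ℕ) * X i) * (Y i * u ^ (a : ℕ)) by simp only [Matrix.mul_assoc], Matrix.mul_apply]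
    simp [hC, hR]
  have hRC : R * C = 1 := by
    ext a b
    have h := congrFun (congrFun (yux S D D2 i i a b a.2 b.2) 0) 0
    have h1 : (R * C) a b = (Y i * (u ^ (a : ℕ) * ui ^ (b : ℕ)) * X i) 0 0 := by
      rw [show Y i * (u ^ (a : ℕ) * ui ^ (b : ℕ)) * X i =
        (Y i * u ^ (a : ℕ)) * (ui ^ (b : ℕ) * X i) by
        simp only [Matrix.mul_assoc], Matrix.mul_apply, Matrix.mul_apply]
      rfl
    rw [h1, h, Matrix.one_apply]
    by_cases hh : a = b
    · subst hh; simp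
    · rw [if_neg hh, if_neg (fun h3 => hh (Fin.ext h3.2))]; rfl
  have hRuC : R * (u * C) = (finRotate (m' + 1)).permMatrix k := by
    ext a b
    have h1 : (R * (u * C)) a b = (Y i * (u ^ ((a : ℕ) + 1) * ui ^ (b : ℕ)) * X i) 0 0 := by
      rw [pow_succ, show Y i * (u ^ (a : ℕ) * u * ui ^ (b : ℕ)) * X i =
        (Y i * u ^ (a : ℕ)) * (u * (ui ^ (b : ℕ) * X i)) by
        simp only [Matrix.mul_assoc], Matrix.mul_apply, Matrix.mul_apply]
      rfl
    have h2 : u ^ ((a : ℕ) + 1) = u ^ ((finRotate (m' + 1) a : Fin (m' + 1)) : ℕ) := by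
      by_cases ha : a = Fin.last m'
      · subst ha
        rw [finRotate_last]
        simpa using hu
      · rw [coe_finRotate_of_ne_last ha]
    rw [h1, h2, yux S D D2 i i _ _ (Fin.is_lt _) b.2]
    simp only [Equiv.Perm.permMatrix, PEquiv.toMatrix_apply, Equiv.toPEquiv_apply, Option.mem_def,
      Option.some.injEq, true_and, Fin.val_inj]
    split_ifs <;> simp
  have h5 : Dh θ (m' + 1) u (e i) = 1 + ((u - 1) * C) * R := by
    unfold Dh
    rw [Matrix.mul_assoc, hCR, sub_mul, one_mul]
    abel
  rw [h5, Matrix.det_one_add_mul_comm, Matrix.sub_mul, Matrix.mul_sub, Matrix.one_mul, hRC, hRuC,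
    add_sub_cancel, Matrix.det_permutation, sign_finRotate]
  have : Odd m' := by
    rcases hme with ⟨a, ha⟩
    exact ⟨a - 1, by omega⟩
  simp [this.neg_one_pow]

theorem det_total (S : Setup θ τ m u ui J) (hme : Even m) (h2 : (2 : k) ≠ 0)
    (D : CData θ τ m ζ c r e) (D2 : CData2 θ τ m r 1 e X Y) (hN : Fintype.card N ≤ m * r)
    (z : Matrix N N k) (hz : τ z * z = 1) (hzu : z * u = u * z) (hzc : ∀ x ∈ c, z * x = x * z) :
    z.det = 1 := by
  have hRC := bigRC S D D2
  have hcard : Fintype.card (Fin r × Fin m) = Fintype.card N := by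
    apply le_antisymm
    · have h1 := Matrix.rank_mul_le_left (bigR m u Y) (bigC m ui X)
      rw [hRC] at h1
      rw [Matrix.rank_one] at h1
      exact h1.trans (Matrix.rank_le_card_width _)
    · simpa [mul_comm] using hN
  have hCR : ∑ i, Phi θ m 1 (e i) = 1 := by
    rw [← bigCR S D2]
    exact (Matrix.mul_eq_one_comm_of_card_eq _ _ _ hcard).1 hRC
  have hθz : θ z = z := S.th_fix.2 hzu
  have hs : ∀ i, ∃ s : k, z * e i = s • e i ∧ (s = 1 ∨ s = -1) := by
    intro i
    have hc := D.comm z hzc i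
    have h1 : z * X i = X i * (Y i * z * X i) := by
      calc z * X i = z * e i * X i := by
            rw [← D2.xy, Matrix.mul_assoc, Matrix.mul_assoc, D2.yx, Matrix.mul_one]
        _ = X i * (Y i * z * X i) := by rw [hc, ← D2.xy]; simp only [Matrix.mul_assoc]
    have h3 : Y i * z * X i = (Y i * z * X i) 0 0 • (1 : Matrix (Fin 1) (Fin 1) k) := by
      ext a b
      fin_cases a; fin_cases b; simp
    set s := (Y i * z * X i) 0 0 with hs
    have h4 : z * e i = s • e i := by
      rw [← D2.xy, ← Matrix.mul_assoc, h1, h3, Matrix.mul_smul, Matrix.mul_one, Matrix.smul_mul]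
    refine ⟨s, h4, ?_⟩
    have h5 := congrArg τ h4
    rw [S.tau_mul, map_smul, D.tau] at h5
    have h6 := congrArg (θ ^ (m / 2)) h4
    rw [hc, map_mul, map_smul, Setup.th_pow_fix hθz] at h6
    set e' := (θ ^ (m / 2)) (e i) with he'
    have h7 : e' = (s * s) • e' := by
      calc e' = (e' * τ z) * z := by rw [mul_assoc, hz, mul_one]
        _ = (s * s) • e' := by rw [h5, smul_mul_assoc, h6, smul_smul]
    have h8 : e' ≠ 0 := by
      rw [he']
      intro h
      exact D.ne i ((map_eq_zero_iff _ (θ ^ (m / 2)).injective).1 h)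
    have h9 : (s * s - 1) • e' = 0 := by rw [sub_smul, one_smul, ← h7, sub_self]
    exact mul_self_eq_one_iff.1 (sub_eq_zero.1 ((smul_eq_zero.1 h9).resolve_right h8))
  choose s hs1 hs2 using hs
  have hPhis : ∀ f : Fin r → Matrix N N k, Phi θ m 1 (∑ i, f i) = ∑ i, Phi θ m 1 (f i) := by
    intro f
    unfold Phi
    rw [Finset.sum_comm]
    simp only [one_pow, one_smul, map_sum]
  have hz1 : ∀ i, z * Phi θ m 1 (e i) = s i • Phi θ m 1 (e i) := by
    intro i
    rw [← Phi_smul, ← hs1]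
    unfold Phi
    rw [Finset.mul_sum]
    apply Finset.sum_congr rfl
    intro j _
    rw [map_mul, Setup.th_pow_fix hθz, mul_smul_comm]
  set g : Fin r → k := fun i => (2 : k)⁻¹ * (1 - s i) with hg
  have hgg : ∀ i, g i * g i = g i := by
    intro i
    simp only [hg]
    rcases hs2 i with h | h <;> rw [h]
    · simp
    · field_simp; norm_num
  set q := ∑ i, g i • e i with hq
  have hfin : z = 1 - (2 : k) • Phi θ m 1 q := by
    calc z = z * ∑ i, Phi θ m 1 (e i) := by rw [hCR, mul_one]
      _ = ∑ i, s i • Phi θ m 1 (e i) := by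
        rw [Finset.mul_sum]; exact Finset.sum_congr rfl fun i _ => hz1 i
      _ = ∑ i, Phi θ m 1 (e i) - (2 : k) • Phi θ m 1 q := by
        rw [hq, hPhis, Finset.smul_sum, ← Finset.sum_sub_distrib]
        apply Finset.sum_congr rfl
        intro i _
        rw [Phi_smul, smul_smul]
        simp only [hg]
        rw [mul_inv_cancel_left₀ h2, sub_smul, one_smul, sub_sub_cancel]
      _ = _ := by rw [hCR]
  rw [hfin]
  apply S.det_refl hme
  · rw [hq, Finset.sum_mul]
    apply Finset.sum_congr rfl
    intro i _
    rw [Finset.mul_sum, Finset.sum_eq_single i]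
    · rw [smul_mul_smul_comm, hgg, D.idem]
    · intro l _ hl
      rw [smul_mul_smul_comm, D.orth' i l hl.symm, smul_zero]
    · simp
  · intro j h1 h3
    rw [hq, map_sum, Finset.sum_mul]
    apply Finset.sum_eq_zero
    intro i _
    rw [Finset.mul_sum]
    apply Finset.sum_eq_zero
    intro l _
    rw [map_smul, smul_mul_smul_comm, D.orth i l j h1 h3, smul_zero]
end partI
section partJ
variable {k : Type*} [Field k] {N : Type*} [Fintype N] [DecidableEq N]

theorem lw_of {r m : ℕ} {H : Set (Matrix N N k)} {c : Submodule k (Matrix N N k)}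
    {b : Fin r → Matrix N N k} (hspan : Submodule.span k (Set.range b) = c) (hm : 0 < m)
    (h : Matrix N N k) (hH : h ∈ H) (hdet : h.det = 1) (w : Matrix (Fin r) (Fin r) k)
    (σ : Equiv.Perm (Fin r)) (hw0 : ∀ i j, i ≠ σ j → w i j = 0) (hwm : ∀ j, w (σ j) j ^ m = 1)
    (hb : ∀ j, h * b j = w (σ j) j • (b (σ j) * h)) : w ∈ littleWeylSet H c b := by
  have hu : IsUnit h.det := by rw [hdet]; exact isUnit_one
  have hh : h * h⁻¹ = 1 := Matrix.mul_nonsing_inv h hu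
  have hh' : h⁻¹ * h = 1 := Matrix.nonsing_inv_mul h hu
  have hw1 : ∀ j, w (σ j) j ≠ 0 := by
    intro j h0
    have := hwm j
    rw [h0, zero_pow hm.ne'] at this
    exact zero_ne_one this
  have h1 : ∀ j, h * b j * h⁻¹ = w (σ j) j • b (σ j) := by
    intro j
    rw [hb, smul_mul_assoc, mul_assoc, hh, mul_one]
  have h2 : ∀ j, h⁻¹ * b (σ j) * h = (w (σ j) j)⁻¹ • b j := by
    intro j
    have : b (σ j) = (w (σ j) j)⁻¹ • (h * b j * h⁻¹) := by
      rw [h1, smul_smul, inv_mul_cancel₀ (hw1 j), one_smul]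
    rw [this, mul_smul_comm, smul_mul_assoc,
      show h⁻¹ * (h * b j * h⁻¹) * h = (h⁻¹ * h) * b j * (h⁻¹ * h) by simp only [mul_assoc], hh',
      one_mul, mul_one]
  have hbc : ∀ j, b j ∈ c := fun j => by
    rw [← hspan]; exact Submodule.subset_span ⟨j, rfl⟩
  refine ⟨h, hH, ?_, ?_, ?_⟩
  · intro x hx
    rw [← hspan] at hx
    induction hx using Submodule.span_induction with
    | mem x hx =>
      obtain ⟨j, rfl⟩ := hx
      rw [h1]; exact c.smul_mem _ (hbc _)
    | zero => simp
    | add x y _ _ hx hy => rw [mul_add, add_mul]; exact c.add_mem hx hy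
    | smul a x _ hx => rw [mul_smul_comm, smul_mul_assoc]; exact c.smul_mem _ hx
  · intro x hx
    rw [← hspan] at hx
    induction hx using Submodule.span_induction with
    | mem x hx =>
      obtain ⟨j, rfl⟩ := hx
      rw [← σ.apply_symm_apply j, h2]; exact c.smul_mem _ (hbc _)
    | zero => simp
    | add x y _ _ hx hy => rw [mul_add, add_mul]; exact c.add_mem hx hy
    | smul a x _ hx => rw [mul_smul_comm, smul_mul_assoc]; exact c.smul_mem _ hx
  · intro j
    rw [h1, Finset.sum_eq_single (σ j)]
    · intro i _ hi
      rw [hw0 i j hi, zero_smul]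
    · simp

theorem lw_to {r m : ℕ} {H : Set (Matrix N N k)} {c : Submodule k (Matrix N N k)}
    {b : Fin r → Matrix N N k} (hm : 2 ≤ m) (hH : ∀ h ∈ H, h.det = 1)
    (hli : LinearIndependent k b)
    (hbb : ∀ i l, i ≠ l → b i * b l = 0) (hbp : ∀ i, b i ^ (m + 1) = b i)
    (w : Matrix (Fin r) (Fin r) k) (hw : w ∈ littleWeylSet H c b) :
    ∃ h ∈ H, ∃ σ : Equiv.Perm (Fin r), (∀ i j, i ≠ σ j → w i j = 0) ∧ (∀ j, w (σ j) j ^ m = 1) ∧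
      ∀ j, h * b j = w (σ j) j • (b (σ j) * h) := by
  obtain ⟨h, hh, _, _, h3⟩ := hw
  have hu : IsUnit h.det := by rw [hH h hh]; exact isUnit_one
  have hh' : h⁻¹ * h = 1 := Matrix.nonsing_inv_mul h hu
  obtain ⟨σ, h4, h5⟩ := monomial_of hm b hli hbb hbp h h⁻¹ hh' w h3
  refine ⟨h, hh, σ, h4, h5, ?_⟩
  intro j
  have h6 := h3 j
  rw [Finset.sum_eq_single (σ j) (fun i _ hi => by rw [h4 i j hi, zero_smul]) (by simp)] at h6
  rw [← smul_mul_assoc, ← h6, mul_assoc, hh', mul_one]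

variable {θ : Matrix N N k ≃ₐ[k] Matrix N N k} {τ : Matrix N N k →ₗ[k] Matrix N N k} {m : ℕ}
    {u ui J : Matrix N N k} {ζ : k} {c : Submodule k (Matrix N N k)} {r d : ℕ}
    {e : Fin r → Matrix N N k}

theorem CData.bb (S : Setup θ τ m u ui J) (D : CData θ τ m ζ c r e) (i l : Fin r) (h : i ≠ l) :
    Phi θ m ζ (e i) * Phi θ m ζ (e l) = 0 := by
  rw [Phi_mul S.thm _ _ (D.orth i l), D.orth' i l h, Phi_zero]

theorem CData.bp (S : Setup θ τ m u ui J) (hζ : IsPrimitiveRoot ζ m) (D : CData θ τ m ζ c r e)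
    (i : Fin r) : Phi θ m ζ (e i) ^ (m + 1) = Phi θ m ζ (e i) := by
  rw [Phi_pow S.thm _ (D.orth i i) (D.idem i), pow_succ, hζ.pow_eq_one, one_mul]

theorem gm1 {w : Matrix (Fin r) (Fin r) k} {σ : Equiv.Perm (Fin r)}
    (hw0 : ∀ i j, i ≠ σ j → w i j = 0) (hwm : ∀ j, w (σ j) j ^ m = 1) : w ∈ GmqrSet k m 1 r := by
  refine ⟨σ, hw0, hwm, ?_⟩
  rw [Nat.div_one, ← Finset.prod_pow]
  simp [hwm]

theorem core_neg [IsAlgClosed k] (S : Setup θ τ m u ui J) (hm : 0 < m) (hme : Even m)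
    (h2 : (2 : k) ≠ 0) (hζ : IsPrimitiveRoot ζ m) (D : CData θ τ m ζ c r e)
    {X : Fin r → Matrix N (Fin d) k} {Y : Fin r → Matrix (Fin d) N k}
    (D2 : CData2 θ τ m r d e X Y) (hu : u ^ m = -1) :
    littleWeylSet {h | τ h * h = 1 ∧ h.det = 1 ∧ h * u = u * h} c (fun i => Phi θ m ζ (e i)) =
      GmqrSet k m 1 r := by
  have hm2 : 2 ≤ m := by rcases hme with ⟨a, ha⟩; omega
  ext w
  constructor
  · intro hw
    obtain ⟨h, _, σ, h4, h5, _⟩ := lw_to hm2 (fun h hh => hh.2.1) D.li (D.bb S) (D.bp S hζ) w hw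
    exact gm1 h4 h5
  · rintro ⟨σ, h4, h5, _⟩
    have hs : ∀ i, (Dh θ m u (e i)).det = ζ ^ m := by
      intro i
      obtain ⟨p1, p2, _⟩ := Dh_props S hζ D i
      rw [hζ.pow_eq_one, S.det_of_neg h2 hme hu _ p1 p2]
    obtain ⟨h, a1, a2, a3, a4⟩ := rz_all S hm hme h2 hζ D D2 m hs σ (fun j => w (σ j) j) h5
    have hd := S.det_of_neg h2 hme hu h a1 a2
    exact lw_of (H := {h | τ h * h = 1 ∧ h.det = 1 ∧ h * u = u * h}) D.span hm h ⟨a1, hd, a2⟩ hd w σ h4 h5 a4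

theorem core_pos (S : Setup θ τ m u ui J) (hm : 0 < m) (hme : Even m)
    (h2 : (2 : k) ≠ 0) (hζ : IsPrimitiveRoot ζ m) (D : CData θ τ m ζ c r e)
    {X : Fin r → Matrix N (Fin 1) k} {Y : Fin r → Matrix (Fin 1) N k}
    (D2 : CData2 θ τ m r 1 e X Y) (hu : u ^ m = 1) (C : Prop)
    (hC : C ↔ (Fintype.card N > m * r ∧ ∃ x : Matrix N N k,
      τ x * x = 1 ∧ x.det = -1 ∧ x * u = u * x ∧ ∀ y ∈ c, x * y = y * x)) :
    (C → littleWeylSet {h | τ h * h = 1 ∧ h.det = 1 ∧ h * u = u * h} c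
      (fun i => Phi θ m ζ (e i)) = GmqrSet k m 1 r) ∧
    (¬ C → littleWeylSet {h | τ h * h = 1 ∧ h.det = 1 ∧ h * u = u * h} c
      (fun i => Phi θ m ζ (e i)) = GmqrSet k m 2 r) := by
  have hm2 : 2 ≤ m := by rcases hme with ⟨a, ha⟩; omega
  have hs : ∀ i, (Dh θ m u (e i)).det = ζ ^ (m / 2) := by
    intro i
    rw [zeta_half hm hme hζ, det_Dh S hm hme hu D D2]
  have hrz := rz_all S hm hme h2 hζ D D2 (m / 2) hs
  have hbc : ∀ j, Phi θ m ζ (e j) ∈ c := fun j => by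
    rw [← D.span]; exact Submodule.subset_span ⟨j, rfl⟩
  have hsq : ∀ h : Matrix N N k, τ h * h = 1 → h.det = 1 ∨ h.det = -1 := by
    intro h hh
    apply mul_self_eq_one_iff.1
    have := congrArg Matrix.det hh
    rwa [Matrix.det_mul, S.det_tau, Matrix.det_one] at this
  constructor
  · intro hCC
    obtain ⟨_, x, x1, x2, x3, x4⟩ := hC.1 hCC
    ext w
    constructor
    · intro hw
      obtain ⟨h, _, σ, h4, h5, _⟩ := lw_to hm2 (fun h hh => hh.2.1) D.li (D.bb S) (D.bp S hζ) w hw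
      exact gm1 h4 h5
    · rintro ⟨σ, h4, h5, _⟩
      obtain ⟨h, a1, a2, a3, a4⟩ := hrz σ (fun j => w (σ j) j) h5
      rcases hsq h a1 with hd | hd
      · exact lw_of (H := {h | τ h * h = 1 ∧ h.det = 1 ∧ h * u = u * h}) D.span hm h ⟨a1, hd, a2⟩ hd w σ h4 h5 a4
      · have hd' : (h * x).det = 1 := by rw [Matrix.det_mul, hd, x2]; norm_num
        refine lw_of (H := {h | τ h * h = 1 ∧ h.det = 1 ∧ h * u = u * h}) D.span hm (h * x) ⟨?_, hd', ?_⟩ hd' w σ h4 h5 ?_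
        · rw [S.tau_mul, show τ x * τ h * (h * x) = τ x * (τ h * h) * x by simp only [mul_assoc], a1,
            mul_one, x1]
        · rw [mul_assoc, x3, ← mul_assoc, a2, mul_assoc]
        · intro j
          rw [mul_assoc, x4 _ (hbc j), ← mul_assoc, a4, smul_mul_assoc, mul_assoc]
  · intro hCC
    rw [hC] at hCC
    have hz1 : ∀ z : Matrix N N k, τ z * z = 1 → z * u = u * z → (∀ x ∈ c, z * x = x * z) →
        z.det = 1 := by
      intro z z1 z2 z3
      by_cases hN : Fintype.card N > m * r
      · rcases hsq z z1 with h | h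
        · exact h
        · exact absurd ⟨hN, z, z1, h, z2, z3⟩ hCC
      · exact det_total S hme h2 D D2 (not_lt.1 hN) z z1 z2 z3
    ext w
    constructor
    · intro hw
      obtain ⟨h, ⟨h1, h2', h3⟩, σ, h4, h5, h6⟩ :=
        lw_to hm2 (fun h hh => hh.2.1) D.li (D.bb S) (D.bp S hζ) w hw
      refine ⟨σ, h4, h5, ?_⟩
      obtain ⟨g, a1, a2, a3, a4⟩ := hrz σ (fun j => w (σ j) j) h5
      have a1' : g * τ g = 1 := mul_eq_one_comm.1 a1
      have a2' : τ g * u = u * τ g := by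
        calc τ g * u = τ g * (u * g) * τ g := by rw [mul_assoc, mul_assoc, a1', mul_one]
          _ = u * τ g := by rw [← a2, ← mul_assoc, a1, one_mul]
      have hd := hz1 (τ g * h) (by
          rw [S.tau_mul, S.tau_tau, show τ h * g * (τ g * h) = τ h * (g * τ g) * h by
            simp only [mul_assoc], a1', mul_one, h1]) (by
          rw [mul_assoc, h3, ← mul_assoc, a2', mul_assoc]) (by
          intro x hx
          rw [← D.span] at hx
          induction hx using Submodule.span_induction with
          | mem x hx =>
            obtain ⟨j, rfl⟩ := hx
            have h7 : τ g * (w (σ j) j • Phi θ m ζ (e (σ j))) = Phi θ m ζ (e j) * τ g := by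
              calc τ g * (w (σ j) j • Phi θ m ζ (e (σ j)))
                  = τ g * (w (σ j) j • (Phi θ m ζ (e (σ j)) * g)) * τ g := by
                    rw [mul_assoc, smul_mul_assoc, mul_assoc, a1', mul_one]
                _ = _ := by rw [← a4, ← mul_assoc, a1, one_mul]
            have h8 : τ g * h * Phi θ m ζ (e j) = Phi θ m ζ (e j) * (τ g * h) := by
              rw [mul_assoc, h6, ← smul_mul_assoc, ← mul_assoc, h7, mul_assoc]
            exact h8
          | zero => simp
          | add x y _ _ hx hy => rw [mul_add, add_mul, hx, hy]
          | smul a x _ hx => rw [mul_smul_comm, smul_mul_assoc, hx])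
      rw [Matrix.det_mul, S.det_tau, a3, h2', mul_one] at hd
      exact hd
    · rintro ⟨σ, h4, h5, h6⟩
      obtain ⟨h, a1, a2, a3, a4⟩ := hrz σ (fun j => w (σ j) j) h5
      have hd : h.det = 1 := by rw [a3, h6]
      exact lw_of (H := {h | τ h * h = 1 ∧ h.det = 1 ∧ h * u = u * h}) D.span hm h ⟨a1, hd, a2⟩ hd w σ h4 h5 a4

/-- transpose with respect to `J` -/
def tauJ (J : Matrix N N k) : Matrix N N k →ₗ[k] Matrix N N k where
  toFun x := J * xᵀ * J
  map_add' x y := by rw [Matrix.transpose_add, mul_add, add_mul]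
  map_smul' a x := by
    rw [Matrix.transpose_smul, Matrix.mul_smul, Matrix.smul_mul]; rfl

/-- inverse conjugation by `u` -/
def thU (u ui : Matrix N N k) (h1 : u * ui = 1) (h2 : ui * u = 1) :
    Matrix N N k ≃ₐ[k] Matrix N N k where
  toFun x := ui * x * u
  invFun x := u * x * ui
  left_inv x := by
    beta_reduce
    rw [show u * (ui * x * u) * ui = (u * ui) * x * (u * ui) by simp only [mul_assoc], h1, one_mul,
      mul_one]
  right_inv x := by
    beta_reduce
    rw [show ui * (u * x * ui) * u = (ui * u) * x * (ui * u) by simp only [mul_assoc], h2, one_mul,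
      mul_one]
  map_mul' x y := by
    rw [show ui * x * u * (ui * y * u) = ui * x * (u * ui) * y * u by simp only [mul_assoc], h1,
      mul_one]
    simp only [mul_assoc]
  map_add' x y := by rw [mul_add, add_mul]
  commutes' a := by
    rw [← Algebra.commutes, mul_assoc, h2, mul_one]

theorem thU_pow (u ui : Matrix N N k) (h1 : u * ui = 1) (h2 : ui * u = 1) (j : ℕ)
    (x : Matrix N N k) : (thU u ui h1 h2 ^ j) x = ui ^ j * x * u ^ j := by
  induction j with
  | zero => simp
  | succ j ih =>
    rw [add_comm, th_add, pow_one, ih, pow_add, pow_add, pow_one, pow_one]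
    change ui * (ui ^ j * x * u ^ j) * u = _
    simp only [mul_assoc]
    rw [← pow_succ, ← pow_succ']

theorem antidiagJ_t (n : ℕ) : (antidiagJ k n)ᵀ = antidiagJ k n := by
  ext i j
  simp [antidiagJ, add_comm]

theorem antidiagJ_sq (n : ℕ) : antidiagJ k n * antidiagJ k n = 1 := by
  ext i j
  rw [Matrix.mul_apply, Finset.sum_eq_single i.rev]
  · simp only [antidiagJ, Matrix.of_apply, Fin.val_rev, Matrix.one_apply]
    rw [if_pos (by omega), one_mul]
    by_cases h : i = j
    · subst h; rw [if_pos rfl, if_pos (by omega)]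
    · rw [if_neg h, if_neg]
      intro h'
      apply h
      apply Fin.ext
      omega
  · intro l _ hl
    simp only [antidiagJ, Matrix.of_apply]
    rw [if_neg, zero_mul]
    intro h'
    apply hl
    apply Fin.ext
    rw [Fin.val_rev]
    omega
  · simp
end partJ
/-- little Weyl group of an inner automorphism of `SO(2n,k)` of
even order exactly `m`, given by `u ∈ O(2n,k)` with `u^m = ±I`: with respect
to a suitable basis of a Cartan subspace `c` (of dimension `r`), if `u^m = -I`
it equals `G(m,1,r)`; if `u^m = I` it equals `G(m,1,r)` when `n > mr/2` and
some `x ∈ O(2n,k)` of determinant `-1` commutes with `u` and with every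
element of `c`, and `G(m,2,r)` otherwise. -/
theorem stmt14 {k : Type*} [Field k] [IsAlgClosed k]
    (hchar : ringChar k = 0 ∨ 2 < ringChar k)
    (m : ℕ) (hm : 0 < m) (hmeven : Even m) (hmchar : ¬ (ringChar k ∣ m))
    (ζ : k) (hζ : IsPrimitiveRoot ζ m)
    (n : ℕ) (hn : 2 ≤ n)
    (u : Matrix (Fin (2 * n)) (Fin (2 * n)) k)
    (huO : u.transpose * antidiagJ k (2 * n) * u = antidiagJ k (2 * n))
    (hordm : u ^ m = 1 ∨ u ^ m = -1)
    (hordleast : ∀ j : ℕ, 0 < j → j < m → u ^ j ≠ 1 ∧ u ^ j ≠ -1)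
    (c : Submodule k (Matrix (Fin (2 * n)) (Fin (2 * n)) k))
    (hc : IsCartanSubspace
      {x | x.transpose * antidiagJ k (2 * n) + antidiagJ k (2 * n) * x = 0 ∧
        u * x * u⁻¹ = ζ • x} c)
    (r : ℕ) (hr : Module.finrank k c = r) :
    ∃ b : Fin r → Matrix (Fin (2 * n)) (Fin (2 * n)) k,
      LinearIndependent k b ∧ Submodule.span k (Set.range b) = c ∧
      (u ^ m = -1 →
        littleWeylSet
          {h | h.transpose * antidiagJ k (2 * n) * h = antidiagJ k (2 * n) ∧
            h.det = 1 ∧ h * u = u * h} c b = GmqrSet k m 1 r) ∧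
      (u ^ m = 1 →
        ((2 * n > m * r ∧ ∃ x : Matrix (Fin (2 * n)) (Fin (2 * n)) k,
            x.transpose * antidiagJ k (2 * n) * x = antidiagJ k (2 * n) ∧
            x.det = -1 ∧ x * u = u * x ∧ ∀ y ∈ c, x * y = y * x) →
          littleWeylSet
            {h | h.transpose * antidiagJ k (2 * n) * h = antidiagJ k (2 * n) ∧
              h.det = 1 ∧ h * u = u * h} c b = GmqrSet k m 1 r) ∧
        (¬ (2 * n > m * r ∧ ∃ x : Matrix (Fin (2 * n)) (Fin (2 * n)) k,
            x.transpose * antidiagJ k (2 * n) * x = antidiagJ k (2 * n) ∧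
            x.det = -1 ∧ x * u = u * x ∧ ∀ y ∈ c, x * y = y * x) →
          littleWeylSet
            {h | h.transpose * antidiagJ k (2 * n) * h = antidiagJ k (2 * n) ∧
              h.det = 1 ∧ h * u = u * h} c b = GmqrSet k m 2 r)) := by
  set J := antidiagJ k (2 * n) with hJ
  have hJt : Jᵀ = J := antidiagJ_t _
  have hJJ : J * J = 1 := antidiagJ_sq _
  have h2 : (2 : k) ≠ 0 := by
    intro h
    have h3 : ((2 : ℕ) : k) = 0 := by exact_mod_cast h
    rw [ringChar.spec] at h3
    rcases hchar with h0 | h0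
    · rw [h0] at h3; omega
    · have := Nat.le_of_dvd (by norm_num) h3; omega
  have hmk : (m : k) ≠ 0 := fun h => hmchar ((ringChar.spec k m).1 h)
  -- the orthogonality relation in terms of the adjoint
  have hO : ∀ h : Matrix (Fin (2 * n)) (Fin (2 * n)) k,
      hᵀ * J * h = J ↔ tauJ J h * h = 1 := by
    intro h
    change _ ↔ J * hᵀ * J * h = 1
    constructor
    · intro e
      rw [show J * hᵀ * J * h = J * (hᵀ * J * h) by simp only [mul_assoc], e, hJJ]
    · intro e
      calc hᵀ * J * h = (J * J) * (hᵀ * J * h) := by rw [hJJ, one_mul]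
        _ = J * (J * hᵀ * J * h) := by simp only [mul_assoc]
        _ = J := by rw [e, mul_one]
  obtain ⟨ui, hui⟩ : ∃ ui, ui = tauJ J u := ⟨_, rfl⟩
  have uiu : ui * u = 1 := by rw [hui]; exact (hO u).1 huO
  have uui : u * ui = 1 := mul_eq_one_comm.1 uiu
  have huinv : u⁻¹ = ui := Matrix.inv_eq_left_inv uiu
  obtain ⟨ε, hε, hum⟩ : ∃ ε : k, (ε = 1 ∨ ε = -1) ∧ u ^ m = ε • 1 := by
    rcases hordm with h | h
    · exact ⟨1, Or.inl rfl, by rw [h, one_smul]⟩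
    · exact ⟨-1, Or.inr rfl, by rw [h, neg_one_smul]⟩
  have hcom : Commute u ui := by rw [Commute, SemiconjBy, uui, uiu]
  have hpp : ∀ j : ℕ, ui ^ j * u ^ j = 1 := fun j => by
    rw [← hcom.symm.mul_pow, uiu, one_pow]
  obtain ⟨θ, hθdef⟩ : ∃ θ, θ = thU u ui uui uiu := ⟨_, rfl⟩
  obtain ⟨τ, hτdef⟩ : ∃ τ, τ = tauJ J := ⟨_, rfl⟩
  have hθm : θ ^ m = 1 := by
    apply AlgEquiv.ext
    intro x
    rw [hθdef, thU_pow, hum, mul_smul_comm, mul_one, ← smul_mul_assoc, ← mul_one (ε • ui ^ m),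
      smul_mul_assoc, ← mul_smul_comm, ← hum, hpp, one_mul]
    rfl
  have S : Setup θ τ m u ui J :=
    { uui := uui
      uiu := uiu
      th := fun x => by rw [hθdef]; rfl
      thm := hθm
      ta := fun x => by rw [hτdef]; rfl
      Jt := hJt
      JJ := hJJ
      tu := by rw [hτdef, hui] }
  rw [← hτdef] at hO
  have hg1 : ∀ x : Matrix (Fin (2 * n)) (Fin (2 * n)) k,
      (xᵀ * J + J * x = 0 ∧ u * x * u⁻¹ = ζ • x) ↔ (τ x = -x ∧ ζ • θ x = x) := by
    intro x
    have e1 : xᵀ * J + J * x = 0 ↔ τ x = -x := by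
      rw [S.ta, eq_neg_iff_add_eq_zero]
      constructor
      · intro e
        have : J * (xᵀ * J + J * x) = J * xᵀ * J + x := by
          rw [mul_add, ← mul_assoc, ← mul_assoc, hJJ, one_mul]
        rw [← this, e, mul_zero]
      · intro e
        have : J * (J * xᵀ * J + x) = xᵀ * J + J * x := by
          rw [mul_add, mul_assoc J, ← mul_assoc J J, hJJ, one_mul]
        rw [← this, e, mul_zero]
    have e2 : u * x * u⁻¹ = ζ • x ↔ ζ • θ x = x := by
      rw [S.th, huinv]
      constructor
      · intro e
        rw [← smul_mul_assoc, ← mul_smul_comm, ← e,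
          show ui * (u * x * ui) * u = (ui * u) * x * (ui * u) by simp only [mul_assoc], uiu]
        simp
      · intro e
        conv_lhs => rw [← e]
        rw [mul_smul_comm, smul_mul_assoc,
          show u * (ui * x * u) * ui = (u * ui) * x * (u * ui) by simp only [mul_assoc], uui]
        simp
    rw [e1, e2]
  let g1 : Submodule k (Matrix (Fin (2 * n)) (Fin (2 * n)) k) :=
    { carrier := {x | xᵀ * J + J * x = 0 ∧ u * x * u⁻¹ = ζ • x}
      zero_mem' := by
        rw [Set.mem_setOf_eq, hg1]; simp
      add_mem' := by
        intro x y hx hy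
        rw [Set.mem_setOf_eq, hg1] at hx hy ⊢
        refine ⟨?_, ?_⟩
        · rw [map_add, hx.1, hy.1]; abel
        · rw [map_add, smul_add, hx.2, hy.2]
      smul_mem' := by
        intro a x hx
        rw [Set.mem_setOf_eq, hg1] at hx ⊢
        refine ⟨?_, ?_⟩
        · rw [map_smul, hx.1, smul_neg]
        · rw [map_smul, smul_comm, hx.2] }
  have hc' : IsCartanSubspace (g1 : Set (Matrix (Fin (2 * n)) (Fin (2 * n)) k)) c := hc
  have hcg : ∀ x ∈ c, τ x = -x ∧ ζ • θ x = x := fun x hx => (hg1 x).1 (hc.1 hx)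
  have hmax : ∀ a, (∀ x ∈ c, a * x = x * a) → τ a = -a → ζ • θ a = a → a ^ (m + 1) = a →
      a ∈ c := by
    intro a b1 b2 b3 b4
    exact hc'.mem_of a ((hg1 a).2 ⟨b2, b3⟩) b1 m hmk b4
  obtain ⟨P, hP, hd⟩ := exists_simul_diag (c : Set (Matrix (Fin (2 * n)) (Fin (2 * n)) k)) hc.2.1
    (fun x hx => (hc.2.2.1 x hx).isSemisimple)
  obtain ⟨e, D⟩ := exists_cdata hP hd θ τ m hm hmeven hθm ζ hζ S.tau_mul S.tau_tau S.tau_th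
    (fun x hx => (hcg x hx).2) (fun x hx => (hcg x hx).1) hmax r hr
  have hτpow : ∀ j : ℕ, τ (u ^ j) = ui ^ j := by
    intro j
    induction j with
    | zero => rw [pow_zero, pow_zero, S.tau_one]
    | succ j ih => rw [pow_succ', S.tau_mul, ih, S.tu, pow_succ]
  obtain ⟨d, X, Y, hd1, D2⟩ := exists_cdata2 h2 ε hε D hm hmeven hθm hζ S.tau_th hmax J
    (u ^ (m / 2)) (ui ^ (m / 2)) hJt hJJ (hpp _)
    (by
      obtain ⟨a, ha⟩ := hmeven
      rw [← pow_add, show m / 2 + m / 2 = m by omega, hum])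
    (by
      rw [← hτpow, S.ta, ← mul_assoc, ← mul_assoc, hJJ, one_mul])
    S.ta (S.th_pow _)
  have hHset : {h : Matrix (Fin (2 * n)) (Fin (2 * n)) k | hᵀ * J * h = J ∧
      h.det = 1 ∧ h * u = u * h} = {h | τ h * h = 1 ∧ h.det = 1 ∧ h * u = u * h} := by
    ext h
    rw [Set.mem_setOf_eq, Set.mem_setOf_eq, hO]
  refine ⟨fun i => Phi θ m ζ (e i), D.li, D.span, ?_, ?_⟩
  · intro hu
    rw [hHset]
    exact core_neg S hm hmeven h2 hζ D D2 hu
  · intro hu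
    have hε1 : ε = 1 := by
      have hn' : Nonempty (Fin (2 * n)) := ⟨⟨0, by omega⟩⟩
      rw [hu] at hum
      have := congrFun (congrFun hum hn'.some) hn'.some
      simpa using this.symm
    obtain rfl := hd1 hε1
    rw [hHset]
    apply core_pos S hm hmeven h2 hζ D D2 hu
    rw [Fintype.card_fin]
    simp only [hO]
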